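/- arXiv:1610.02676 — 4 statements merged into one kernel-verified Lean document; each statement's English description precedes it below -/
import Mathlib

section
/- Let G = (V,E) be a graph, let P = {V₁,…,V_k} be a partition of V into k parts all of exactly the same size, and let Q be a weak ε-regular partition of V refining P. Then for every pair a ≠ b, the partition Q|_{V_a} ∪ Q|_{V_b} of the induced bipartite graph G[V_a,V_b] is weak εk-regular in the bipartite sense: for every S ⊆ V_a and T ⊆ V_b with |S| ≥ εk|V_a| and |T| ≥ εk|V_b|, one has Σ_{U ∈ Q|_{V_a}, U' ∈ Q|_{V_b}} (|S ∩ U||T ∩ U'|/(|S||T|)) · |d(S ∩ U, T ∩ U') − d(U,U')| ≤ εk. -/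
/-!
Since all parts of `P` have the same size, `k|V_a| = |V|`, so `S` and `T` are large enough to
test the weak `ε`-regularity of `Q` directly. The bipartite sum is a subsum of the resulting sum
of nonnegative terms, hence at most `ε`, which is at most `εk` because `0 ≤ ε` and `1 ≤ k`.
-/

open Finset
open scoped Classical

/-- `eCnt G A B` is the number of ordered pairs `(u,v) ∈ A × B` with `uv` an edge of `G`. -/
noncomputable def eCnt {V : Type*} [Fintype V] (G : SimpleGraph V) (A B : Finset V) : ℕ :=
  ((A ×ˢ B).filter fun p => G.Adj p.1 p.2).card

/-- The edge density `d(A,B)` between vertex subsets `A` and `B`. -/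
noncomputable def dens {V : Type*} [Fintype V] (G : SimpleGraph V) (A B : Finset V) : ℝ :=
  eCnt G A B / (A.card * B.card)

/-- A partition `{V₁,…,V_k}` of the vertex set is weak `ε`-regular if for all disjoint
`S, T ⊆ V` with `|S|, |T| ≥ ε|V|` we have
`Σ_{i,j} (|S ∩ V_i||T ∩ V_j|/(|S||T|))·|d(S ∩ V_i, T ∩ V_j) − d(V_i,V_j)| ≤ ε`. -/
def IsWeakRegular {V : Type*} [Fintype V] [DecidableEq V] (G : SimpleGraph V) (ε : ℝ)
    (P : Finpartition (univ : Finset V)) : Prop :=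
  ∀ S T : Finset V, Disjoint S T →
    ε * Fintype.card V ≤ S.card → ε * Fintype.card V ≤ T.card →
    ∑ U ∈ P.parts, ∑ U' ∈ P.parts,
      ((S ∩ U).card : ℝ) * ((T ∩ U').card : ℝ) / (S.card * T.card) *
        |dens G (S ∩ U) (T ∩ U') - dens G U U'| ≤ ε

section WeakDiscrepancy

variable {V : Type*} [Fintype V] [DecidableEq V] {G : SimpleGraph V}

/-- The sum bounded in weak regularity: over pairs of blocks `U ∈ 𝓐` and `U' ∈ 𝓑`, the deviation
of `d(S ∩ U, T ∩ U')` from `d(U, U')`, weighted by the share of `S × T` that lies in `U × U'`.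
The families of blocks are arbitrary, so that a partition and its restrictions to vertex subsets
are covered alike. -/
noncomputable def weakDiscrepancy (G : SimpleGraph V) (𝓐 𝓑 : Finset (Finset V))
    (S T : Finset V) : ℝ :=
  ∑ U ∈ 𝓐, ∑ U' ∈ 𝓑,
    ((S ∩ U).card : ℝ) * ((T ∩ U').card : ℝ) / (S.card * T.card) *
      |dens G (S ∩ U) (T ∩ U') - dens G U U'|

theorem weakDiscrepancy_mono {𝓐 𝓐' 𝓑 𝓑' : Finset (Finset V)} (h𝓐 : 𝓐 ⊆ 𝓐') (h𝓑 : 𝓑 ⊆ 𝓑')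
    (S T : Finset V) : weakDiscrepancy G 𝓐 𝓑 S T ≤ weakDiscrepancy G 𝓐' 𝓑' S T := by
  simp only [weakDiscrepancy, ← sum_product']
  exact sum_le_sum_of_subset_of_nonneg (product_subset_product h𝓐 h𝓑)
    fun _ _ _ => by positivity

-- A negative `ε` would admit `S = T = ∅`, whose weights are `0 / 0 = 0`.
theorem IsWeakRegular.nonneg {ε : ℝ} {Q : Finpartition (univ : Finset V)}
    (hQ : IsWeakRegular G ε Q) : 0 ≤ ε := by
  by_contra! hε
  have hempty : ε * Fintype.card V ≤ (∅ : Finset V).card := by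
    simpa only [card_empty, Nat.cast_zero] using
      mul_nonpos_of_nonpos_of_nonneg hε.le (Nat.cast_nonneg _)
  have hsum : 0 ≤ ε := by simpa using hQ ∅ ∅ (disjoint_empty_left ∅) hempty hempty
  exact hε.not_ge hsum

end WeakDiscrepancy

theorem card_parts_mul_card_of_card_eq {α : Type*} [DecidableEq α] {s : Finset α}
    (P : Finpartition s) (hP : ∀ W ∈ P.parts, ∀ W' ∈ P.parts, W.card = W'.card)
    {W : Finset α} (hW : W ∈ P.parts) : P.parts.card * W.card = s.card :=
  (sum_const_nat fun W' hW' => hP W' hW' W hW).symm.trans P.sum_card_parts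

theorem induced_weak_regular_general {V : Type*} [Fintype V] [DecidableEq V]
    {G : SimpleGraph V} {ε c : ℝ} {Q : Finpartition (univ : Finset V)}
    (hQ : IsWeakRegular G ε Q) {A B : Finset V} (hAB : Disjoint A B)
    (hA : Fintype.card V ≤ c * A.card) (hB : Fintype.card V ≤ c * B.card) :
    ∀ S ⊆ A, ∀ T ⊆ B, ε * c * A.card ≤ S.card → ε * c * B.card ≤ T.card →
      weakDiscrepancy G (Q.parts.filter (· ⊆ A)) (Q.parts.filter (· ⊆ B)) S T ≤ ε := by
  intro S hSA T hTB hS hT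
  have hS' : ε * Fintype.card V ≤ S.card :=
    (mul_le_mul_of_nonneg_left hA hQ.nonneg).trans (by rwa [← mul_assoc])
  have hT' : ε * Fintype.card V ≤ T.card :=
    (mul_le_mul_of_nonneg_left hB hQ.nonneg).trans (by rwa [← mul_assoc])
  calc weakDiscrepancy G (Q.parts.filter (· ⊆ A)) (Q.parts.filter (· ⊆ B)) S T
      ≤ weakDiscrepancy G Q.parts Q.parts S T :=
        weakDiscrepancy_mono (filter_subset _ _) (filter_subset _ _) S T
    _ ≤ ε := hQ S T (hAB.mono hSA hTB) hS' hT'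

/-- **Weak regularity is inherited by the induced bipartite graphs (Claim 3.9).**
Let `P = {V₁,…,V_k}` be a partition of `V(G)` into parts of exactly the same size, and let
`Q` be a weak `ε`-regular partition refining `P`. Then for all distinct `V_a, V_b ∈ P`,
the partition `Q|_{V_a} ∪ Q|_{V_b}` of the bipartite graph `G[V_a,V_b]` is weak
`εk`-regular in the bipartite sense. -/
theorem induced_weak_regular {V : Type*} [Fintype V] [DecidableEq V] (G : SimpleGraph V)
    (ε : ℝ) (P Q : Finpartition (univ : Finset V))
    (hsize : ∀ W ∈ P.parts, ∀ W' ∈ P.parts, W.card = W'.card)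
    (hQP : Q ≤ P) (hQ : IsWeakRegular G ε Q)
    (Va Vb : Finset V) (hVa : Va ∈ P.parts) (hVb : Vb ∈ P.parts) (hab : Va ≠ Vb) :
    ∀ S ⊆ Va, ∀ T ⊆ Vb,
      ε * P.parts.card * Va.card ≤ S.card → ε * P.parts.card * Vb.card ≤ T.card →
      ∑ U ∈ Q.parts.filter (· ⊆ Va), ∑ U' ∈ Q.parts.filter (· ⊆ Vb),
        ((S ∩ U).card : ℝ) * ((T ∩ U').card : ℝ) / (S.card * T.card) *
          |dens G (S ∩ U) (T ∩ U') - dens G U U'| ≤ ε * P.parts.card := by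
  have hcard {W} (hW : W ∈ P.parts) : (Fintype.card V : ℝ) ≤ P.parts.card * W.card :=
    mod_cast (card_parts_mul_card_of_card_eq P hsize hW).ge
  exact fun S hS T hT hSc hTc =>
    (induced_weak_regular_general hQ (P.disjoint hVa hVb hab) (hcard hVa) (hcard hVb)
      S hS T hT hSc hTc).trans
      (le_mul_of_one_le_right hQ.nonneg (mod_cast card_pos.2 ⟨Va, hVa⟩))
end

section
/- Let H be a graph with h vertices and m edges, let G' be a k-partite (ε,p)-graph on vertex classes (U₁,…,U_k) with |U_i| = n for all i, and let G be a graph on V(G') such that for every i ≠ j with d_{G'}(U_i,U_j) > 0, the bipartite graph G[U_i,U_j] is δ-close to G'[U_i,U_j]. Suppose δ ≤ 1/(2m), ε ≤ (p^{m+1}/(32h⁴))², and n ≥ 4h^{h+3}/p^m. If G' contains a copy of H, then the number of copies of H in G is at least ((1 − δm)/2) · p^m · n^h. -/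
/-!
A copy of `H` in `G'` assigns to each vertex `a` of `H` a class, renamed `U a`, so that every edge
of `H` goes to an `ε`-regular pair of density at least `p`. Let `X` be the set of maps `f` with
`f a ∈ U a` for all `a`, so that `|X| = n ^ h`.

Resample `f a` and `f b` for an edge `ab` of `H`: given the other coordinates, the conditions on
the other edges restrict `f a` and `f b` to independently chosen sets `A' ⊆ U a` and `B' ⊆ U b`,
because no other edge contains both `a` and `b`. Hence regularity lets one replace the condition at
`ab` by its density `d_ab`, at a cost of `ε |X|`.

Doing this at all edges, `(∏ d_e ± m ε) |X|` maps in `X` are homomorphisms to `G'`. Doing it at all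
edges but `e`, at most `(δ ∏ d_e + (m - 1) ε) |X|` of them use at `e` an edge missing from `G`. At
most `h (h - 1) |X| / n` maps in `X` are not injective. So `G` has at least
`((1 - δ m) p ^ m - m² ε - h (h - 1) / n) |X|` copies of `H`, where `1 - δ m ≥ 1 / 2` and the two
error terms are at most `p ^ m / 8` each.
-/

open Finset
open scoped Classical

/-- The pair `(A,B)` is `ε`-regular. -/
def RegPair {V : Type*} [Fintype V] (G : SimpleGraph V) (ε : ℝ) (A B : Finset V) : Prop :=
  ∀ A' ⊆ A, ∀ B' ⊆ B, ε * A.card ≤ A'.card → ε * B.card ≤ B'.card →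
    |dens G A B - dens G A' B'| ≤ ε

/-- The number of pairs `(u,v) ∈ A × B` on which the bipartite graphs `G[A,B]` and
`G'[A,B]` differ, i.e. `|E_G(A,B) △ E_{G'}(A,B)|`. -/
noncomputable def bipSymmDiff {V : Type*} [Fintype V] (G G' : SimpleGraph V)
    (A B : Finset V) : ℕ :=
  ((A ×ˢ B).filter fun pq => ¬ (G.Adj pq.1 pq.2 ↔ G'.Adj pq.1 pq.2)).card

/-- The number of copies of `H` in `G`, i.e. of injective maps `V(H) → V(G)` that map
edges of `H` to edges of `G`. -/
noncomputable def copyCount {α β : Type*} (H : SimpleGraph α) (G : SimpleGraph β) : ℕ :=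
  Nat.card {f : α → β // Function.Injective f ∧ ∀ ⦃a b : α⦄, H.Adj a b → G.Adj (f a) (f b)}

/-! ### Resampling coordinates -/

section Resampling

variable {α : Type*} [Fintype α]

lemma sum_piFinset_sum_update {V : α → Type*} {M : Type*} [AddCommMonoid M]
    (U : ∀ a, Finset (V a)) (a : α) (F : (∀ a, V a) → M) :
    ∑ f ∈ Fintype.piFinset U, ∑ x ∈ U a, F (Function.update f a x) =
      #(U a) • ∑ f ∈ Fintype.piFinset U, F f := by
  -- Exchanging `f a` with the new value `x` is an involution of the pairs `(f, x)`.
  let swap (q : (∀ a, V a) × V a) : (∀ a, V a) × V a := (Function.update q.1 a q.2, q.1 a)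
  have swap_mem : ∀ q ∈ Fintype.piFinset U ×ˢ U a, swap q ∈ Fintype.piFinset U ×ˢ U a := by
    rintro ⟨f, x⟩ hq
    obtain ⟨hf, hx⟩ := mem_product.1 hq
    rw [Fintype.mem_piFinset] at hf
    refine mem_product.2 ⟨Fintype.mem_piFinset.2 fun b ↦ ?_, hf a⟩
    obtain rfl | hb := eq_or_ne b a
    · simpa [swap] using hx
    · simpa [swap, Function.update_of_ne hb] using hf b
  have swap_swap : ∀ q, swap (swap q) = q := fun q ↦ by simp [swap]
  calc ∑ f ∈ Fintype.piFinset U, ∑ x ∈ U a, F (Function.update f a x)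
      = ∑ q ∈ Fintype.piFinset U ×ˢ U a, F (swap q).1 := (sum_product' ..).symm
    _ = ∑ q ∈ Fintype.piFinset U ×ˢ U a, F q.1 :=
        sum_nbij' swap swap swap_mem swap_mem (fun q _ ↦ swap_swap q) (fun q _ ↦ swap_swap q)
          fun _ _ ↦ rfl
    _ = #(U a) • ∑ f ∈ Fintype.piFinset U, F f := by
        simp only [sum_product, sum_const, smul_sum]

lemma card_mul_card_mul_card_filter_piFinset {V : α → Type*} (U : ∀ a, Finset (V a)) (a b : α)
    (P : (∀ a, V a) → Prop) [DecidablePred P] :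
    #(U a) * (#(U b) * #{f ∈ Fintype.piFinset U | P f}) =
      ∑ f ∈ Fintype.piFinset U,
        #{q ∈ U a ×ˢ U b | P (Function.update (Function.update f a q.1) b q.2)} := by
  simp only [card_filter, sum_product]
  rw [sum_piFinset_sum_update U a
    fun f ↦ ∑ y ∈ U b, if P (Function.update f b y) then 1 else 0,
    sum_piFinset_sum_update U b fun f ↦ if P f then 1 else 0]
  simp only [smul_eq_mul]

lemma card_mul_card_filter_apply_eq_apply_le {V : Type*} (U : α → Finset V) {a b : α}
    (hab : a ≠ b) :
    #(U a) * #{f ∈ Fintype.piFinset U | f a = f b} ≤ #(Fintype.piFinset U) := by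
  calc #(U a) * #{f ∈ Fintype.piFinset U | f a = f b}
      = ∑ f ∈ Fintype.piFinset U, #{x ∈ U a | x = f b} := by
        have h := sum_piFinset_sum_update U a fun f ↦ if f a = f b then 1 else 0
        simpa only [Function.update_self, Function.update_of_ne hab.symm, smul_eq_mul,
          ← card_filter] using h.symm
    _ ≤ ∑ _ ∈ Fintype.piFinset U, 1 :=
        sum_le_sum fun f _ ↦ card_le_one.2 (by simp +contextual)
    _ = #(Fintype.piFinset U) := (card_eq_sum_ones _).symm

lemma mul_card_filter_not_injective_le {V : Type*} (U : α → Finset V) {n : ℕ}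
    (hU : ∀ a, n ≤ #(U a)) :
    n * #{f ∈ Fintype.piFinset U | ¬ Function.Injective f} ≤
      Fintype.card α * (Fintype.card α - 1) * #(Fintype.piFinset U) := by
  have hcover : {f ∈ Fintype.piFinset U | ¬ Function.Injective f} ⊆
      (univ : Finset α).offDiag.biUnion fun q ↦ {f ∈ Fintype.piFinset U | f q.1 = f q.2} := by
    intro f hf
    obtain ⟨hfU, hinj⟩ := mem_filter.1 hf
    obtain ⟨a, b, hfab, hab⟩ := Function.not_injective_iff.1 hinj
    exact mem_biUnion.2 ⟨(a, b), by simpa using hab, mem_filter.2 ⟨hfU, hfab⟩⟩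
  calc n * #{f ∈ Fintype.piFinset U | ¬ Function.Injective f}
      ≤ n * ∑ q ∈ (univ : Finset α).offDiag, #{f ∈ Fintype.piFinset U | f q.1 = f q.2} :=
        Nat.mul_le_mul_left n ((card_le_card hcover).trans card_biUnion_le)
    _ = ∑ q ∈ (univ : Finset α).offDiag, n * #{f ∈ Fintype.piFinset U | f q.1 = f q.2} :=
        mul_sum ..
    _ ≤ ∑ _ ∈ (univ : Finset α).offDiag, #(Fintype.piFinset U) :=
        sum_le_sum fun _ hq ↦ (Nat.mul_le_mul_right _ (hU _)).trans
          (card_mul_card_filter_apply_eq_apply_le U (mem_offDiag.1 hq).2.2)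
    _ = Fintype.card α * (Fintype.card α - 1) * #(Fintype.piFinset U) := by
        rw [sum_const, smul_eq_mul, offDiag_card, card_univ, Nat.mul_sub_one]

end Resampling

/-! ### Densities and regular pairs -/

section Density

variable {V : Type*} [Fintype V] {G G' : SimpleGraph V} {A B : Finset V}

lemma eCnt_comm (G : SimpleGraph V) (A B : Finset V) : eCnt G A B = eCnt G B A :=
  card_nbij' Prod.swap Prod.swap (fun _ ↦ by simp +contextual [G.adj_comm])
    (fun _ ↦ by simp +contextual [G.adj_comm]) (fun _ _ ↦ rfl) fun _ _ ↦ rfl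

lemma eCnt_le_card_mul_card (G : SimpleGraph V) (A B : Finset V) : eCnt G A B ≤ #A * #B :=
  (card_filter_le _ _).trans (card_product A B).le

lemma eCnt_ne_zero_of_adj {u v : V} (hu : u ∈ A) (hv : v ∈ B) (huv : G.Adj u v) :
    eCnt G A B ≠ 0 :=
  card_ne_zero_of_mem (mem_filter.2 ⟨mk_mem_product hu hv, huv⟩)

lemma dens_comm (G : SimpleGraph V) (A B : Finset V) : dens G A B = dens G B A := by
  rw [_root_.dens, _root_.dens, eCnt_comm, mul_comm]

lemma dens_nonneg (G : SimpleGraph V) (A B : Finset V) : 0 ≤ dens G A B := by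
  unfold _root_.dens; positivity

lemma dens_le_one (G : SimpleGraph V) (A B : Finset V) : dens G A B ≤ 1 :=
  div_le_one_of_le₀ (mod_cast eCnt_le_card_mul_card G A B) (by positivity)

lemma dens_mul_card_mul_card (G : SimpleGraph V) (A B : Finset V) :
    dens G A B * (#A * #B) = eCnt G A B :=
  div_mul_cancel_of_imp fun h ↦ by
    have : eCnt G A B ≤ 0 := (eCnt_le_card_mul_card G A B).trans_eq (mod_cast h)
    exact_mod_cast Nat.le_zero.1 this

lemma eCnt_sdiff_le_bipSymmDiff (G G' : SimpleGraph V) (A B : Finset V) :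
    eCnt (G' \ G) A B ≤ bipSymmDiff G G' A B :=
  card_le_card fun q hq ↦ by
    simp only [mem_filter, SimpleGraph.sdiff_adj] at hq ⊢
    tauto

lemma dens_sdiff_le {δ : ℝ} (h : bipSymmDiff G G' A B ≤ δ * eCnt G' A B) :
    dens (G' \ G) A B ≤ δ * dens G' A B := by
  rw [_root_.dens, _root_.dens, ← mul_div_assoc]
  gcongr
  exact (Nat.cast_le.2 (eCnt_sdiff_le_bipSymmDiff G G' A B)).trans h

lemma RegPair.nonneg {ε : ℝ} (h : RegPair G ε A B) : 0 ≤ ε := by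
  by_contra! hε
  have hle (C : Finset V) : ε * #C ≤ #C :=
    (mul_nonpos_of_nonpos_of_nonneg hε.le (by positivity)).trans (by positivity)
  exact hε.not_ge ((abs_nonneg _).trans (h A subset_rfl B subset_rfl (hle A) (hle B)))

lemma RegPair.abs_eCnt_sub_le {ε : ℝ} (h : RegPair G ε A B) {A' B' : Finset V} (hA : A' ⊆ A)
    (hB : B' ⊆ B) :
    |(eCnt G A' B' : ℝ) - dens G A B * (#A' * #B')| ≤ ε * (#A * #B) := by
  have hε := h.nonneg
  have hA' : (#A' : ℝ) ≤ #A := mod_cast card_le_card hA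
  have hB' : (#B' : ℝ) ≤ #B := mod_cast card_le_card hB
  by_cases hlarge : ε * #A ≤ #A' ∧ ε * #B ≤ #B'
  · calc |(eCnt G A' B' : ℝ) - dens G A B * (#A' * #B')|
        = |dens G A B - dens G A' B'| * (#A' * #B') := by
          rw [← dens_mul_card_mul_card, ← sub_mul, abs_mul, abs_sub_comm,
            abs_of_nonneg (by positivity : (0 : ℝ) ≤ #A' * #B')]
      _ ≤ ε * (#A * #B) := by
          gcongr
          exact h A' hA B' hB hlarge.1 hlarge.2
  -- If `A'` or `B'` is small, then both quantities lie between `0` and `|A'| |B'| ≤ ε |A| |B|`.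
  · have hsmall : (#A' * #B' : ℝ) ≤ ε * (#A * #B) := by
      rw [not_and_or, not_le, not_le] at hlarge
      rcases hlarge with hlt | hlt
      · rw [← mul_assoc]
        gcongr
      · rw [mul_left_comm]
        gcongr
    have hd := mul_le_of_le_one_left (by positivity : (0 : ℝ) ≤ #A' * #B') (dens_le_one G A B)
    have hd₀ := mul_nonneg (dens_nonneg G A B) (by positivity : (0 : ℝ) ≤ #A' * #B')
    exact (abs_sub_le_of_nonneg_of_le (by positivity)
      (mod_cast eCnt_le_card_mul_card G A' B') hd₀ hd).trans hsmall

end Density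

/-! ### Counting partite homomorphisms -/

section PartiteHoms

variable {α V : Type*}

/-- The density of `G` between the classes `U a` and `U b`, as a function of the unordered pair
`s(a, b)`. -/
noncomputable def edgeDens [Fintype V] (G : SimpleGraph V) (U : α → Finset V) : Sym2 α → ℝ :=
  Sym2.lift ⟨fun a b ↦ dens G (U a) (U b), fun a b ↦ dens_comm G (U a) (U b)⟩

@[simp]
lemma edgeDens_mk [Fintype V] (G : SimpleGraph V) (U : α → Finset V) (a b : α) :
    edgeDens G U s(a, b) = dens G (U a) (U b) := rfl

lemma edgeDens_nonneg [Fintype V] (G : SimpleGraph V) (U : α → Finset V) (e : Sym2 α) :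
    0 ≤ edgeDens G U e := by
  induction e with | _ a b => exact dens_nonneg G (U a) (U b)

lemma edgeDens_le_one [Fintype V] (G : SimpleGraph V) (U : α → Finset V) (e : Sym2 α) :
    edgeDens G U e ≤ 1 := by
  induction e with | _ a b => exact dens_le_one G (U a) (U b)

/-- The map `f` sends every pair `e ∈ T` to an edge of `Γ e`. The target graph may depend on `e`, so
that one edge can be sent to `G' \ G` and all the others to `G'`. -/
def MapsEdges (Γ : Sym2 α → SimpleGraph V) (T : Finset (Sym2 α)) (f : α → V) : Prop :=
  ∀ e ∈ T, Sym2.map f e ∈ (Γ e).edgeSet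

lemma mapsEdges_insert {Γ : Sym2 α → SimpleGraph V} {T : Finset (Sym2 α)} {e : Sym2 α}
    {f : α → V} :
    MapsEdges Γ (insert e T) f ↔ Sym2.map f e ∈ (Γ e).edgeSet ∧ MapsEdges Γ T f :=
  forall_mem_insert ..

/-- The candidates for the image of `a` once the images under `f` of all vertices other than `a`
and `b` are fixed: the elements of `U a` satisfying the conditions imposed by the pairs in `T` that
do not contain `b`. -/
noncomputable def candidates (U : α → Finset V) (Γ : Sym2 α → SimpleGraph V)
    (T : Finset (Sym2 α)) (f : α → V) (a b : α) : Finset V :=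
  {x ∈ U a | MapsEdges Γ {e ∈ T | b ∉ e} (Function.update f a x)}

lemma candidates_subset (U : α → Finset V) (Γ : Sym2 α → SimpleGraph V) (T : Finset (Sym2 α))
    (f : α → V) (a b : α) : candidates U Γ T f a b ⊆ U a :=
  filter_subset _ _

@[simp]
lemma candidates_empty (U : α → Finset V) (Γ : Sym2 α → SimpleGraph V) (f : α → V) (a b : α) :
    candidates U Γ ∅ f a b = U a := by
  simp [candidates, MapsEdges]

lemma sym2Map_update_of_notMem {a : α} {e : Sym2 α} (ha : a ∉ e) (f : α → V) (x : V) :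
    Sym2.map (Function.update f a x) e = Sym2.map f e :=
  Sym2.map_congr fun _ hc ↦ Function.update_of_ne (ne_of_mem_of_not_mem hc ha) x f

lemma mapsEdges_update_update_iff {Γ : Sym2 α → SimpleGraph V} {T : Finset (Sym2 α)} {a b : α}
    (hab : a ≠ b) (habT : s(a, b) ∉ T) {f : α → V} {x y : V} :
    MapsEdges Γ T (Function.update (Function.update f a x) b y) ↔
      MapsEdges Γ {e ∈ T | b ∉ e} (Function.update f a x) ∧
        MapsEdges Γ {e ∈ T | a ∉ e} (Function.update f b y) := by
  have notMem_or_notMem {e : Sym2 α} (he : e ∈ T) : b ∉ e ∨ a ∉ e := by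
    by_contra! h
    exact habT ((Sym2.mem_and_mem_iff hab).1 h.symm ▸ he)
  have map_of_b_notMem {e : Sym2 α} (hb : b ∉ e) :=
    sym2Map_update_of_notMem hb (Function.update f a x) y
  have map_of_a_notMem {e : Sym2 α} (ha : a ∉ e) :
      Sym2.map (Function.update (Function.update f a x) b y) e =
        Sym2.map (Function.update f b y) e := by
    rw [Function.update_comm hab, sym2Map_update_of_notMem ha]
  simp only [MapsEdges, mem_filter, and_imp]
  refine ⟨fun h ↦ ⟨fun e he hb ↦ map_of_b_notMem hb ▸ h e he,
    fun e he ha ↦ map_of_a_notMem ha ▸ h e he⟩, fun ⟨h_a, h_b⟩ e he ↦ ?_⟩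
  rcases notMem_or_notMem he with hb | ha
  · exact map_of_b_notMem hb ▸ h_a e he hb
  · exact map_of_a_notMem ha ▸ h_b e he ha

lemma filter_mapsEdges_update_update_eq (U : α → Finset V) (Γ : Sym2 α → SimpleGraph V)
    {T : Finset (Sym2 α)} {a b : α} (hab : a ≠ b) (habT : s(a, b) ∉ T) (f : α → V) :
    {q ∈ U a ×ˢ U b | MapsEdges Γ T (Function.update (Function.update f a q.1) b q.2)} =
      candidates U Γ T f a b ×ˢ candidates U Γ T f b a := by
  ext q
  simp only [candidates, mem_filter, mem_product, mapsEdges_update_update_iff hab habT]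
  exact and_and_and_comm

variable [Fintype α]

/-- The maps `f` with `f a ∈ U a` for all `a` that send every pair `e ∈ T` to an edge of `Γ e`; for
constant `Γ` and `T` the edge set of `H`, the homomorphisms from `H` respecting the classes. -/
noncomputable def partiteHoms (U : α → Finset V) (Γ : Sym2 α → SimpleGraph V)
    (T : Finset (Sym2 α)) : Finset (α → V) :=
  {f ∈ Fintype.piFinset U | MapsEdges Γ T f}

@[simp]
lemma partiteHoms_empty (U : α → Finset V) (Γ : Sym2 α → SimpleGraph V) :
    partiteHoms U Γ ∅ = Fintype.piFinset U := by
  simp [partiteHoms, MapsEdges]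

lemma card_mul_card_mul_card_partiteHoms (U : α → Finset V) (Γ : Sym2 α → SimpleGraph V)
    {T : Finset (Sym2 α)} {a b : α} (hab : a ≠ b) (habT : s(a, b) ∉ T) :
    #(U a) * (#(U b) * #(partiteHoms U Γ T)) =
      ∑ f ∈ Fintype.piFinset U, #(candidates U Γ T f a b) * #(candidates U Γ T f b a) := by
  rw [partiteHoms, card_mul_card_mul_card_filter_piFinset]
  simp only [filter_mapsEdges_update_update_eq U Γ hab habT, card_product]

variable [Fintype V]

lemma card_mul_card_mul_card_partiteHoms_insert (U : α → Finset V) (Γ : Sym2 α → SimpleGraph V)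
    {T : Finset (Sym2 α)} {a b : α} (hab : a ≠ b) (habT : s(a, b) ∉ T) :
    #(U a) * (#(U b) * #(partiteHoms U Γ (insert s(a, b) T))) =
      ∑ f ∈ Fintype.piFinset U,
        eCnt (Γ s(a, b)) (candidates U Γ T f a b) (candidates U Γ T f b a) := by
  rw [partiteHoms, card_mul_card_mul_card_filter_piFinset]
  refine sum_congr rfl fun f _ ↦ ?_
  rw [eCnt, ← filter_mapsEdges_update_update_eq U Γ hab habT, filter_filter]
  congr 1
  refine filter_congr fun q _ ↦ ?_
  rw [mapsEdges_insert, Sym2.map_mk, SimpleGraph.mem_edgeSet, Function.update_self,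
    Function.update_of_ne hab, Function.update_self, and_comm]

lemma card_partiteHoms_singleton (U : α → Finset V) (Γ : Sym2 α → SimpleGraph V) {e : Sym2 α}
    (he : ¬ e.IsDiag) :
    (#(partiteHoms U Γ {e}) : ℝ) = edgeDens (Γ e) U e * #(Fintype.piFinset U) := by
  obtain hX | hX := (Fintype.piFinset U).eq_empty_or_nonempty
  · simp [partiteHoms, hX]
  induction e with | _ a b =>
  have hpos (c : α) : (0 : ℝ) < #(U c) := mod_cast (Fintype.piFinset_nonempty.1 hX c).card_pos
  have hcount : (#(U a) * (#(U b) * #(partiteHoms U Γ {s(a, b)})) : ℝ) =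
      #(Fintype.piFinset U) * eCnt (Γ s(a, b)) (U a) (U b) := by
    have h := card_mul_card_mul_card_partiteHoms_insert U Γ (Sym2.mk_isDiag_iff.not.1 he)
      (notMem_empty _)
    simp only [candidates_empty, sum_const, smul_eq_mul, insert_empty_eq] at h
    exact_mod_cast h
  rw [← dens_mul_card_mul_card] at hcount
  refine mul_left_cancel₀ (mul_pos (hpos a) (hpos b)).ne' ?_
  rw [edgeDens_mk]
  linarith

lemma abs_card_partiteHoms_insert_sub_le {U : α → Finset V} {Γ : Sym2 α → SimpleGraph V} {ε : ℝ}
    {T : Finset (Sym2 α)} {a b : α} (hab : a ≠ b) (habT : s(a, b) ∉ T)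
    (hreg : RegPair (Γ s(a, b)) ε (U a) (U b)) :
    |(#(partiteHoms U Γ (insert s(a, b) T)) : ℝ) -
        dens (Γ s(a, b)) (U a) (U b) * #(partiteHoms U Γ T)| ≤
      ε * #(Fintype.piFinset U) := by
  obtain hX | hX := (Fintype.piFinset U).eq_empty_or_nonempty
  · simp [partiteHoms, hX]
  have hpos (c : α) : (0 : ℝ) < #(U c) := mod_cast (Fintype.piFinset_nonempty.1 hX c).card_pos
  have hc : (0 : ℝ) < #(U a) * #(U b) := mul_pos (hpos a) (hpos b)
  have hT := congrArg (Nat.cast (R := ℝ)) (card_mul_card_mul_card_partiteHoms U Γ hab habT)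
  have hinsert := congrArg (Nat.cast (R := ℝ))
    (card_mul_card_mul_card_partiteHoms_insert U Γ hab habT)
  push_cast at hT hinsert
  rw [← mul_assoc] at hT hinsert
  set d := dens (Γ s(a, b)) (U a) (U b)
  refine le_of_mul_le_mul_left ?_ hc
  calc (#(U a) * #(U b) : ℝ) *
        |(#(partiteHoms U Γ (insert s(a, b) T)) : ℝ) - d * #(partiteHoms U Γ T)|
      = |∑ f ∈ Fintype.piFinset U,
          ((eCnt (Γ s(a, b)) (candidates U Γ T f a b) (candidates U Γ T f b a) : ℝ) -
            d * (#(candidates U Γ T f a b) * #(candidates U Γ T f b a)))| := by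
        rw [sum_sub_distrib, ← mul_sum, ← hT, ← hinsert, mul_left_comm d, ← mul_sub, abs_mul,
          abs_of_pos hc]
    _ ≤ ∑ _ ∈ Fintype.piFinset U, ε * (#(U a) * #(U b)) :=
        (abs_sum_le_sum_abs _ _).trans <| sum_le_sum fun f _ ↦
          hreg.abs_eCnt_sub_le (candidates_subset ..) (candidates_subset ..)
    _ = #(U a) * #(U b) * (ε * #(Fintype.piFinset U)) := by
        rw [sum_const, nsmul_eq_mul]
        ring

lemma abs_card_partiteHoms_union_sub_le {U : α → Finset V} {Γ : Sym2 α → SimpleGraph V} {ε : ℝ}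
    {S T : Finset (Sym2 α)} (hST : Disjoint S T)
    (hS : ∀ a b, s(a, b) ∈ S → a ≠ b ∧ RegPair (Γ s(a, b)) ε (U a) (U b)) :
    |(#(partiteHoms U Γ (S ∪ T)) : ℝ) - (∏ e ∈ S, edgeDens (Γ e) U e) * #(partiteHoms U Γ T)| ≤
      #S * (ε * #(Fintype.piFinset U)) := by
  induction S using Finset.induction_on with
  | empty => simp
  | insert e S heS ih =>
    obtain ⟨heT, hST⟩ := disjoint_insert_left.1 hST
    have hrest := ih hST fun a b h ↦ hS a b (mem_insert_of_mem h)
    have hstep : |(#(partiteHoms U Γ (insert e (S ∪ T))) : ℝ) -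
        edgeDens (Γ e) U e * #(partiteHoms U Γ (S ∪ T))| ≤ ε * #(Fintype.piFinset U) := by
      induction e with | _ a b =>
      obtain ⟨hab, hreg⟩ := hS a b (mem_insert_self _ _)
      exact abs_card_partiteHoms_insert_sub_le hab (by simp [heS, heT]) hreg
    rw [insert_union, prod_insert heS, card_insert_of_notMem heS, mul_assoc]
    set P : ℝ := (∏ e ∈ S, edgeDens (Γ e) U e) * #(partiteHoms U Γ T)
    calc |(#(partiteHoms U Γ (insert e (S ∪ T))) : ℝ) - edgeDens (Γ e) U e * P|
        ≤ |(#(partiteHoms U Γ (insert e (S ∪ T))) : ℝ) -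
            edgeDens (Γ e) U e * #(partiteHoms U Γ (S ∪ T))| +
          edgeDens (Γ e) U e * |#(partiteHoms U Γ (S ∪ T)) - P| := by
          rw [← abs_of_nonneg (edgeDens_nonneg (Γ e) U e), ← abs_mul,
            abs_of_nonneg (edgeDens_nonneg (Γ e) U e), mul_sub]
          exact abs_sub_le _ _ _
      _ ≤ ε * #(Fintype.piFinset U) + 1 * (#S * (ε * #(Fintype.piFinset U))) := by
          gcongr
          exact edgeDens_le_one (Γ e) U e
      _ = ((#S + 1 : ℕ) : ℝ) * (ε * #(Fintype.piFinset U)) := by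
          push_cast
          ring

end PartiteHoms

section CloseGraphs

variable {α V : Type*} [Fintype α] {U : α → Finset V} {G G' : SimpleGraph V}

lemma card_partiteHoms_le_add_sum (U : α → Finset V) (G G' : SimpleGraph V)
    (E : Finset (Sym2 α)) :
    #(partiteHoms U (fun _ ↦ G') E) ≤ #(partiteHoms U (fun _ ↦ G) E) +
      ∑ e ∈ E, #(partiteHoms U (Function.update (fun _ ↦ G') e (G' \ G)) E) := by
  have hcover : partiteHoms U (fun _ ↦ G') E ⊆ partiteHoms U (fun _ ↦ G) E ∪
      E.biUnion fun e ↦ partiteHoms U (Function.update (fun _ ↦ G') e (G' \ G)) E := by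
    intro f hf
    obtain ⟨hfU, hfE⟩ := mem_filter.1 hf
    by_cases hG : MapsEdges (fun _ ↦ G) E f
    · exact mem_union_left _ (mem_filter.2 ⟨hfU, hG⟩)
    obtain ⟨e, he, heG⟩ : ∃ e ∈ E, Sym2.map f e ∉ G.edgeSet := by simpa [MapsEdges] using hG
    refine mem_union_right _ (mem_biUnion.2 ⟨e, he, mem_filter.2 ⟨hfU, fun e' he' ↦ ?_⟩⟩)
    obtain rfl | hne := eq_or_ne e' e
    · rw [Function.update_self, SimpleGraph.edgeSet_sdiff]
      exact ⟨hfE e' he', heG⟩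
    · rw [Function.update_of_ne hne]
      exact hfE e' he'
  exact (card_le_card hcover).trans ((card_union_le _ _).trans
    (Nat.add_le_add_left card_biUnion_le _))

variable [Fintype V] {ε δ : ℝ} {E : Finset (Sym2 α)}

lemma card_partiteHoms_update_sdiff_le
    (hE : ∀ a b, s(a, b) ∈ E → a ≠ b ∧ RegPair G' ε (U a) (U b))
    {e : Sym2 α} (he : e ∈ E) (hδ : edgeDens (G' \ G) U e ≤ δ * edgeDens G' U e) :
    (#(partiteHoms U (Function.update (fun _ ↦ G') e (G' \ G)) E) : ℝ) ≤
      (δ * ∏ e ∈ E, edgeDens G' U e + (#E - 1) * ε) * #(Fintype.piFinset U) := by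
  set Γ : Sym2 α → SimpleGraph V := Function.update (fun _ ↦ G') e (G' \ G) with hΓ
  have hΓ_ne {e' : Sym2 α} (h : e' ∈ E.erase e) : Γ e' = G' :=
    Function.update_of_ne (ne_of_mem_erase h) _ _
  have hediag : ¬ e.IsDiag := by
    induction e with | _ a b => exact Sym2.mk_isDiag_iff.not.2 (hE a b he).1
  have htele := abs_card_partiteHoms_union_sub_le (U := U) (Γ := Γ) (ε := ε)
    (disjoint_singleton_right.2 (notMem_erase e E)) fun a b h ↦ by
      rw [hΓ_ne h]
      exact hE a b (mem_of_mem_erase h)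
  rw [union_comm, ← insert_eq, insert_erase he, card_partiteHoms_singleton U Γ hediag,
    prod_congr rfl fun e' h ↦ by rw [hΓ_ne h], card_erase_of_mem he,
    Nat.cast_pred (card_pos.2 ⟨e, he⟩), hΓ, Function.update_self, ← hΓ] at htele
  have hprod : (∏ e' ∈ E.erase e, edgeDens G' U e') * edgeDens (G' \ G) U e ≤
      δ * ∏ e' ∈ E, edgeDens G' U e' := by
    rw [← prod_erase_mul E _ he, mul_left_comm]
    exact mul_le_mul_of_nonneg_left hδ (prod_nonneg fun e' _ ↦ edgeDens_nonneg G' U e')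
  have hprodX := mul_le_mul_of_nonneg_right hprod (Nat.cast_nonneg #(Fintype.piFinset U))
  linarith [(abs_le.1 htele).2]

lemma le_card_partiteHoms_of_close
    (hE : ∀ a b, s(a, b) ∈ E → a ≠ b ∧ RegPair G' ε (U a) (U b))
    (hδ : ∀ e ∈ E, edgeDens (G' \ G) U e ≤ δ * edgeDens G' U e) :
    ((1 - δ * #E) * ∏ e ∈ E, edgeDens G' U e - #E ^ 2 * ε) * #(Fintype.piFinset U) ≤
      #(partiteHoms U (fun _ ↦ G) E) := by
  set D := ∏ e ∈ E, edgeDens G' U e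
  have hG' : (D - #E * ε) * #(Fintype.piFinset U) ≤ #(partiteHoms U (fun _ ↦ G') E) := by
    have h := abs_card_partiteHoms_union_sub_le (Γ := fun _ ↦ G') (disjoint_empty_right E) hE
    rw [union_empty, partiteHoms_empty] at h
    linarith [(abs_le.1 h).1]
  have hmissing := sum_le_card_nsmul E _ _ fun e he ↦
    card_partiteHoms_update_sdiff_le hE he (hδ e he)
  have hcover : (#(partiteHoms U (fun _ ↦ G') E) : ℝ) ≤ _ :=
    Nat.cast_le.2 (card_partiteHoms_le_add_sum U G G' E)
  push_cast at hcover
  rw [nsmul_eq_mul] at hmissing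
  linarith

end CloseGraphs

/-! ### Counting copies -/

section Copies

variable {α V : Type*} {H : SimpleGraph α} {G G' : SimpleGraph V}

lemma nonempty_hom_of_copyCount_pos (h : 0 < copyCount H G) : Nonempty (H →g G) :=
  let ⟨f, _, hf⟩ := (Nat.card_pos_iff.1 h).1
  ⟨f, fun hab ↦ hf hab⟩

lemma exists_classes_of_hom [Fintype V] {ι : Type*} {U : ι → Finset V}
    (hdisj : ∀ i j, i ≠ j → Disjoint (U i) (U j)) (hcover : ∀ v, ∃ i, v ∈ U i)
    (hG : ∀ u v, G.Adj u v → ∃ i j, i ≠ j ∧ u ∈ U i ∧ v ∈ U j) (f : H →g G) :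
    ∃ φ : α → ι, ∀ a b, H.Adj a b → φ a ≠ φ b ∧ eCnt G (U (φ a)) (U (φ b)) ≠ 0 := by
  choose φ hφ using fun a ↦ hcover (f a)
  have hunique {a : α} {i : ι} (hi : f a ∈ U i) : i = φ a := by
    by_contra hne
    exact disjoint_left.1 (hdisj i (φ a) hne) hi (hφ a)
  refine ⟨φ, fun a b hab ↦ ?_⟩
  obtain ⟨i, j, hij, hi, hj⟩ := hG _ _ (f.map_adj hab)
  exact ⟨hunique hi ▸ hunique hj ▸ hij, eCnt_ne_zero_of_adj (hφ a) (hφ b) (f.map_adj hab)⟩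

variable [Fintype α]

lemma card_partiteHoms_le_copyCount_add [Finite V] (H : SimpleGraph α) (G : SimpleGraph V)
    (U : α → Finset V) :
    #(partiteHoms U (fun _ ↦ G) H.edgeFinset) ≤
      copyCount H G + #{f ∈ Fintype.piFinset U | ¬ Function.Injective f} := by
  have hcopies : #{f ∈ partiteHoms U (fun _ ↦ G) H.edgeFinset | Function.Injective f} ≤
      copyCount H G := by
    rw [copyCount, ← Set.ncard_coe_finset]
    refine Set.ncard_le_ncard (fun f hf ↦ ?_) (Set.toFinite _)
    obtain ⟨hfhom, hinj⟩ := mem_filter.1 hf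
    exact ⟨hinj, fun a b hab ↦ (mem_filter.1 hfhom).2 s(a, b) (by simpa using hab)⟩
  rw [← card_filter_add_card_filter_not (s := partiteHoms U (fun _ ↦ G) H.edgeFinset)
    Function.Injective]
  exact Nat.add_le_add hcopies (card_le_card (filter_subset_filter _ (filter_subset _ _)))

lemma le_copyCount_of_regular [Fintype V] {U : α → Finset V} {n : ℕ} {ε p δ : ℝ} (hn : 0 < n)
    (hU : ∀ a, #(U a) = n) (hp : 0 ≤ p) (hδ : δ * #H.edgeFinset ≤ 1)
    (hadj : ∀ a b, H.Adj a b → RegPair G' ε (U a) (U b) ∧ p ≤ dens G' (U a) (U b) ∧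
      bipSymmDiff G G' (U a) (U b) ≤ δ * eCnt G' (U a) (U b)) :
    ((1 - δ * #H.edgeFinset) * p ^ #H.edgeFinset - (#H.edgeFinset : ℝ) ^ 2 * ε -
        (Fintype.card α * (Fintype.card α - 1) : ℕ) / n) * (n : ℝ) ^ Fintype.card α ≤
      copyCount H G := by
  have hadj_of_mem {a b : α} (h : s(a, b) ∈ H.edgeFinset) : H.Adj a b := by simpa using h
  have hX : (#(Fintype.piFinset U) : ℝ) = (n : ℝ) ^ Fintype.card α := by simp [hU]
  have hprod : p ^ #H.edgeFinset ≤ ∏ e ∈ H.edgeFinset, edgeDens G' U e := by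
    rw [← prod_const]
    refine prod_le_prod (fun _ _ ↦ hp) fun e he ↦ ?_
    induction e with | _ a b => exact (hadj a b (hadj_of_mem he)).2.1
  have hhoms := le_card_partiteHoms_of_close (U := U) (G := G) (G' := G') (E := H.edgeFinset)
    (fun a b h ↦ ⟨(hadj_of_mem h).ne, (hadj a b (hadj_of_mem h)).1⟩) fun e he ↦ by
      induction e with | _ a b => exact dens_sdiff_le (hadj a b (hadj_of_mem he)).2.2
  have hnoninj : (#{f ∈ Fintype.piFinset U | ¬ Function.Injective f} : ℝ) ≤
      (Fintype.card α * (Fintype.card α - 1) : ℕ) / n * #(Fintype.piFinset U) := by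
    rw [div_mul_eq_mul_div, le_div_iff₀' (by positivity)]
    exact_mod_cast mul_card_filter_not_injective_le U fun a ↦ (hU a).ge
  have hcopies : (#(partiteHoms U (fun _ ↦ G) H.edgeFinset) : ℝ) ≤
      copyCount H G + #{f ∈ Fintype.piFinset U | ¬ Function.Injective f} :=
    mod_cast card_partiteHoms_le_copyCount_add H G U
  rw [← hX]
  have hmain := mul_le_mul_of_nonneg_right
    (mul_le_mul_of_nonneg_left hprod (sub_nonneg.2 hδ)) (Nat.cast_nonneg #(Fintype.piFinset U))
  linarith

end Copies

/-! ### Bounds on the parameters -/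

section Parameters

variable {δ ε p : ℝ} {h m n : ℕ}

lemma mul_le_half_of_le_one_div (hδ : δ ≤ 1 / (2 * m)) : δ * m ≤ 1 / 2 := by
  obtain rfl | hm := eq_or_ne m 0
  · norm_num
  calc δ * m ≤ 1 / (2 * m) * m := by gcongr
    _ = 1 / 2 := by field_simp

lemma pow_card_edgeFinset_le_one {α : Type*} [Fintype α] {H : SimpleGraph α} (hp : 0 ≤ p)
    (h : ∀ a b, H.Adj a b → p ≤ 1) : p ^ #H.edgeFinset ≤ 1 := by
  rw [← prod_const]
  refine prod_le_one (fun _ _ ↦ hp) fun e he ↦ ?_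
  induction e with | _ a b => exact h a b (by simpa using he)

lemma card_edgeFinset_le_sq {α : Type*} [Fintype α] (H : SimpleGraph α) :
    #H.edgeFinset ≤ Fintype.card α ^ 2 := by
  convert H.card_edgeFinset_le_card_choose_two.trans (Nat.choose_le_pow _ 2)

lemma sq_mul_le_pow_div_eight (hp : 0 < p) (hp1 : p ^ m ≤ 1) (hh : 0 < h) (hm : m ≤ h ^ 2)
    (hε : ε ≤ (p ^ (m + 1) / (32 * (h : ℝ) ^ 4)) ^ 2) : m ^ 2 * ε ≤ p ^ m / 8 := by
  obtain rfl | hm0 := eq_or_ne m 0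
  · norm_num
  have hp_le : p ≤ 1 := (pow_le_one_iff_of_nonneg hp.le hm0).1 hp1
  have hp_succ : p ^ (m + 1) ≤ p ^ m := pow_le_pow_of_le_one hp.le hp_le m.le_succ
  have hh4 : (1 : ℝ) ≤ (h : ℝ) ^ 4 := one_le_pow₀ (mod_cast hh)
  have hmh : (m : ℝ) ≤ (h : ℝ) ^ 2 := mod_cast hm
  calc m ^ 2 * ε ≤ m ^ 2 * (p ^ (m + 1) / (32 * (h : ℝ) ^ 4)) ^ 2 := by gcongr
    _ ≤ ((h : ℝ) ^ 2) ^ 2 * (p ^ (m + 1) / (32 * (h : ℝ) ^ 4)) ^ 2 := by gcongr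
    _ = p ^ (m + 1) * p ^ (m + 1) / (1024 * (h : ℝ) ^ 4) := by field_simp; ring
    _ ≤ 1 * p ^ m / (8 * 1) := by
        gcongr
        · exact hp_succ.trans hp1
        · norm_num
    _ = p ^ m / 8 := by ring

lemma two_mul_mul_pred_le_pow (h : ℕ) : 2 * (h * (h - 1)) ≤ h ^ (h + 3) := by
  obtain rfl | hh := h.eq_zero_or_pos
  · simp
  calc 2 * (h * (h - 1)) = h * (2 * (h - 1)) := by ring
    _ ≤ h * h ^ 2 := by
        gcongr
        obtain ⟨k, rfl⟩ := Nat.exists_eq_add_of_le' hh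
        rw [Nat.add_sub_cancel]
        nlinarith
    _ = h ^ 3 := by ring
    _ ≤ h ^ (h + 3) := Nat.pow_le_pow_right hh (by lia)

lemma mul_pred_div_le_pow_div_eight (hp : 0 < p) (hn0 : 0 < n)
    (hn : (4 : ℝ) * (h : ℝ) ^ (h + 3) / p ^ m ≤ n) :
    ((h * (h - 1) : ℕ) : ℝ) / n ≤ p ^ m / 8 := by
  have hpow : 2 * ((h * (h - 1) : ℕ) : ℝ) ≤ (h : ℝ) ^ (h + 3) :=
    mod_cast two_mul_mul_pred_le_pow h
  rw [div_le_iff₀ (pow_pos hp m)] at hn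
  rw [div_le_iff₀ (mod_cast hn0)]
  linarith

end Parameters

/-- **The approximate counting lemma (Lemma 4.1).**
Let `H` have `h` vertices and `m` edges, let `G'` be a `k`-partite `(ε,p)`-graph on classes
`(U₁,…,U_k)` each of size `n`, and let `G` be a graph on `V(G')` such that `G[U_i,U_j]` is
`δ`-close to `G'[U_i,U_j]` whenever `d_{G'}(U_i,U_j) > 0`. If `δ ≤ 1/2m`,
`ε ≤ (p^{m+1}/32h⁴)²`, `n ≥ 4h^{h+3}/p^m` and `G'` contains a copy of `H`, then `G`
contains at least `((1 − δm)/2)·p^m·n^h` copies of `H`. -/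
theorem approximate_counting {α : Type*} [Fintype α] {V : Type*} [Fintype V] [DecidableEq V]
    (H : SimpleGraph α) (G' G : SimpleGraph V)
    (h m : ℕ) (hcardH : Fintype.card α = h) (hedgesH : H.edgeSet.ncard = m)
    (k n : ℕ) (U : Fin k → Finset V)
    (hdisj : ∀ i j : Fin k, i ≠ j → Disjoint (U i) (U j))
    (hcover : ∀ v : V, ∃ i, v ∈ U i)
    (hsizes : ∀ i, (U i).card = n)
    (hmultipartite : ∀ u v, G'.Adj u v → ∃ i j : Fin k, i ≠ j ∧ u ∈ U i ∧ v ∈ U j)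
    (ε p δ : ℝ) (hε : 0 < ε) (hp : 0 < p) (hδ : 0 ≤ δ)
    (hepg : ∀ i j : Fin k, i ≠ j →
      eCnt G' (U i) (U j) = 0 ∨ (RegPair G' ε (U i) (U j) ∧ p ≤ dens G' (U i) (U j)))
    (hclose : ∀ i j : Fin k, i ≠ j → 0 < dens G' (U i) (U j) →
      (bipSymmDiff G G' (U i) (U j) : ℝ) ≤ δ * eCnt G' (U i) (U j))
    (hδm : δ ≤ 1 / (2 * m)) (hεb : ε ≤ (p ^ (m + 1) / (32 * (h : ℝ) ^ 4)) ^ 2)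
    (hn : (4 : ℝ) * (h : ℝ) ^ (h + 3) / p ^ m ≤ n)
    (hcopy : 0 < copyCount H G') :
    ((1 - δ * m) / 2) * p ^ m * (n : ℝ) ^ h ≤ copyCount H G := by
  -- For `h = 0` the bound on `ε` reads `ε ≤ 0`, since `x / 0 = 0`.
  have hh : h ≠ 0 := by rintro rfl; norm_num at hεb; linarith
  have hn0 : 0 < n := Nat.cast_pos.1 (lt_of_lt_of_le (by positivity) hn)
  have hm : #H.edgeFinset = m := by
    rw [← hedgesH, ← SimpleGraph.coe_edgeFinset, Set.ncard_coe_finset]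
  obtain ⟨f⟩ := nonempty_hom_of_copyCount_pos hcopy
  obtain ⟨φ, hφ⟩ := exists_classes_of_hom hdisj hcover hmultipartite f
  have hpairs (a b : α) (hab : H.Adj a b) : RegPair G' ε (U (φ a)) (U (φ b)) ∧
      p ≤ dens G' (U (φ a)) (U (φ b)) ∧
      bipSymmDiff G G' (U (φ a)) (U (φ b)) ≤ δ * eCnt G' (U (φ a)) (U (φ b)) := by
    obtain ⟨hne, hcount⟩ := hφ a b hab
    obtain ⟨hreg, hdens⟩ := (hepg _ _ hne).resolve_left hcount
    exact ⟨hreg, hdens, hclose _ _ hne (hp.trans_le hdens)⟩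
  have hδ_half := mul_le_half_of_le_one_div hδm
  have hcopies := le_copyCount_of_regular hn0 (fun a ↦ hsizes (φ a)) hp.le
    (hm ▸ hδ_half.trans (by norm_num)) hpairs
  have hp1 : p ^ m ≤ 1 :=
    hm ▸ pow_card_edgeFinset_le_one hp.le fun a b hab ↦ (hpairs a b hab).2.1.trans (dens_le_one ..)
  have hregErr := sq_mul_le_pow_div_eight hp hp1 (Nat.pos_of_ne_zero hh)
    (hm ▸ hcardH ▸ card_edgeFinset_le_sq H) hεb
  have hinjErr := mul_pred_div_le_pow_div_eight hp hn0 hn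
  rw [hm, hcardH] at hcopies
  have hhalf : 1 / 2 * p ^ m ≤ (1 - δ * m) * p ^ m := by gcongr; linarith
  exact le_trans (by gcongr; linarith) hcopies
end

section
/- For every integer d ≥ 200 and every even integer n with 2 ≤ n ≤ 2^{⌊d/200⌋}, there exists an (n, d, α, β)-sequence with α = √(2 ln(d)/n) and β = 1/16. -/
open Finset

/-!
Write `n = 2m` and match the ground set perfectly, identifying it with `κ × ℤˣ` where `|κ| = m`. A
`d × m` sign matrix `M` yields `d` equitable bipartitions, the `i`-th one given by the sign
`s * M i k` of the element `(k, s)`; matched elements are always separated. A part of the `i`-th and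
a part of the `j`-th bipartition meet in `(m ± R) / 2` elements, where `R` is the inner product of
rows `i` and `j`. Elements over distinct `k` and `l` lie on the same side of `(d ± C) / 2`
bipartitions, where `C` is the inner product of columns `k` and `l`. So it suffices that
`|R| ≤ 4αm` for all pairs of rows and `|C| ≤ 2βd` for all pairs of columns.

In a uniformly random matrix, an inner product of length `N` has exponential moments
`cosh t ^ N ≤ exp (N t² / 2)`, so Chernoff's bound and a union bound show that these inequalities
fail with probability at most `2 d² exp (-8 α² m) + 2 m² exp (-2 β² d)`. For the given `α` and `β`
this is `2 d⁻⁶ + 2 m² exp (-d / 128) < 1`.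
-/

section ExponentialMoments

variable {ι κ Ω : Type*} [Fintype ι] [Fintype κ] [Fintype Ω]

lemma card_filter_le_abs_le_of_sum_exp_le {X : Ω → ℝ} {σ T : ℝ} (hσ : 0 ≤ σ) (hT : 0 ≤ T)
    (hX : ∀ t, ∑ ω, Real.exp (t * X ω) ≤ Fintype.card Ω * Real.exp (σ * t ^ 2 / 2)) :
    (#{ω | T ≤ |X ω|} : ℝ) ≤ 2 * Real.exp (-T ^ 2 / (2 * σ)) * Fintype.card Ω := by
  -- the minimizer of the exponent `σ t² / 2 - t T`
  set t := T / σ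
  have ht : 0 ≤ t := div_nonneg hT hσ
  have markov : #{ω | T ≤ |X ω|} * Real.exp (t * T) ≤
      ∑ ω, (Real.exp (t * X ω) + Real.exp (-t * X ω)) := by
    rw [← nsmul_eq_mul]
    refine (card_nsmul_le_sum _ _ _ fun ω hω ↦ ?_).trans
      (sum_le_univ_sum_of_nonneg fun ω ↦ by positivity)
    calc Real.exp (t * T) ≤ Real.exp |t * X ω| := by
          rw [abs_mul, abs_of_nonneg ht]
          gcongr
          exact (mem_filter.1 hω).2
      _ ≤ Real.exp (t * X ω) + Real.exp (-t * X ω) := by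
          simpa only [neg_mul] using Real.exp_abs_le (t * X ω)
  have hneg := hX (-t)
  rw [neg_sq] at hneg
  have hexponent : σ * t ^ 2 / 2 = -T ^ 2 / (2 * σ) + t * T := by
    rcases hσ.eq_or_lt with rfl | hσ
    · simp [t]
    · simp only [t]
      field
  refine le_of_mul_le_mul_right ?_ (Real.exp_pos (t * T))
  calc #{ω | T ≤ |X ω|} * Real.exp (t * T)
      ≤ ∑ ω, Real.exp (t * X ω) + ∑ ω, Real.exp (-t * X ω) := markov.trans_eq sum_add_distrib
    _ ≤ 2 * (Fintype.card Ω * Real.exp (σ * t ^ 2 / 2)) := by linarith [hX t]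
    _ = 2 * Real.exp (-T ^ 2 / (2 * σ)) * Fintype.card Ω * Real.exp (t * T) := by
      rw [hexponent, Real.exp_add]
      ring

/-- The inner product of two sign vectors, that is, the number of coordinates in which they agree
minus the number of those in which they differ. -/
noncomputable def signInner (u v : ι → ℤˣ) : ℝ := ∑ i, (((u i * v i : ℤˣ) : ℤ) : ℝ)

variable [DecidableEq ι] [DecidableEq κ]

lemma sum_comp_mul_of_ne (f : ℤˣ → ℝ) {k l : κ} (hkl : k ≠ l) :
    ∑ v : κ → ℤˣ, f (v k * v l) = Fintype.card (κ → ℤˣ) * ((f 1 + f (-1)) / 2) := by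
  have hflip : Function.Involutive fun v : κ → ℤˣ ↦ Function.update v k (-v k) := fun v ↦ by simp
  have hneg : ∑ v : κ → ℤˣ, f (v k * v l) = ∑ v : κ → ℤˣ, f (-(v k * v l)) := by
    rw [← Equiv.sum_comp hflip.toPerm]
    simp [hkl.symm]
  have hpair (s : ℤˣ) : f s + f (-s) = f 1 + f (-1) := by
    rcases Int.units_eq_one_or s with rfl | rfl
    · rfl
    · rw [neg_neg, add_comm]
  have hsum : ∑ v : κ → ℤˣ, (f (v k * v l) + f (-(v k * v l))) =
      Fintype.card (κ → ℤˣ) * (f 1 + f (-1)) := by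
    simp_rw [hpair, sum_const, card_univ, nsmul_eq_mul]
  rw [sum_add_distrib, ← hneg] at hsum
  linarith

lemma sum_exp_mul_signInner_columns_le {k l : κ} (hkl : k ≠ l) (t : ℝ) :
    ∑ M : ι → κ → ℤˣ, Real.exp (t * signInner (M · k) (M · l)) ≤
      Fintype.card (ι → κ → ℤˣ) * Real.exp (Fintype.card ι * t ^ 2 / 2) := by
  have hrow : ∑ v : κ → ℤˣ, Real.exp (t * ((v k * v l : ℤˣ) : ℤ)) =
      Fintype.card (κ → ℤˣ) * Real.cosh t := by
    rw [sum_comp_mul_of_ne (fun s ↦ Real.exp (t * (s : ℤ))) hkl, Real.cosh_eq]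
    simp
  calc ∑ M : ι → κ → ℤˣ, Real.exp (t * signInner (M · k) (M · l))
      = ∏ _i : ι, ∑ v : κ → ℤˣ, Real.exp (t * ((v k * v l : ℤˣ) : ℤ)) := by
        simp_rw [Fintype.prod_sum, signInner, mul_sum, Real.exp_sum]
    _ = Fintype.card (ι → κ → ℤˣ) * Real.cosh t ^ Fintype.card ι := by
        rw [hrow, prod_const, card_univ, mul_pow, Fintype.card_fun (α := ι), Nat.cast_pow]
    _ ≤ Fintype.card (ι → κ → ℤˣ) * Real.exp (t ^ 2 / 2) ^ Fintype.card ι := by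
        gcongr
        exact Real.cosh_le_exp_half_sq t
    _ = Fintype.card (ι → κ → ℤˣ) * Real.exp (Fintype.card ι * t ^ 2 / 2) := by
        rw [← Real.exp_nat_mul, mul_div_assoc]

end ExponentialMoments

section SignMatrices

variable {ι κ : Type*} [Fintype ι] [Fintype κ]

lemma card_exists_le_abs_signInner_columns_le [DecidableEq ι] [DecidableEq κ] {T : ℝ}
    (hT : 0 ≤ T) :
    (#{M : ι → κ → ℤˣ | ∃ k l, k ≠ l ∧ T ≤ |signInner (M · k) (M · l)|} : ℝ) ≤
      Fintype.card κ ^ 2 * (2 * Real.exp (-T ^ 2 / (2 * Fintype.card ι))) *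
        Fintype.card (ι → κ → ℤˣ) := by
  let bad (p : κ × κ) : Finset (ι → κ → ℤˣ) := {M | T ≤ |signInner (M · p.1) (M · p.2)|}
  have hbad : ∀ p ∈ (univ : Finset κ).offDiag, (#(bad p) : ℝ) ≤
      2 * Real.exp (-T ^ 2 / (2 * Fintype.card ι)) * Fintype.card (ι → κ → ℤˣ) := fun p hp ↦
    card_filter_le_abs_le_of_sum_exp_le (Nat.cast_nonneg _) hT
      (sum_exp_mul_signInner_columns_le (mem_offDiag.1 hp).2.2)
  have hpairs : (#(univ : Finset κ).offDiag : ℝ) ≤ Fintype.card κ ^ 2 := by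
    rw [offDiag_card, card_univ, ← sq]
    exact_mod_cast Nat.sub_le _ _
  calc (#{M : ι → κ → ℤˣ | ∃ k l, k ≠ l ∧ T ≤ |signInner (M · k) (M · l)|} : ℝ)
      ≤ #((univ : Finset κ).offDiag.biUnion bad) := by
        gcongr
        intro M
        simp [bad]
    _ ≤ ∑ p ∈ (univ : Finset κ).offDiag, (#(bad p) : ℝ) := mod_cast card_biUnion_le
    _ ≤ #(univ : Finset κ).offDiag *
          (2 * Real.exp (-T ^ 2 / (2 * Fintype.card ι)) * Fintype.card (ι → κ → ℤˣ)) := by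
        simpa only [nsmul_eq_mul] using sum_le_card_nsmul _ _ _ hbad
    _ ≤ Fintype.card κ ^ 2 *
          (2 * Real.exp (-T ^ 2 / (2 * Fintype.card ι)) * Fintype.card (ι → κ → ℤˣ)) := by
        gcongr
    _ = _ := (mul_assoc _ _ _).symm

lemma card_exists_le_abs_signInner_rows_le [DecidableEq ι] [DecidableEq κ] {T : ℝ}
    (hT : 0 ≤ T) :
    (#{M : ι → κ → ℤˣ | ∃ i j, i ≠ j ∧ T ≤ |signInner (M i) (M j)|} : ℝ) ≤
      Fintype.card ι ^ 2 * (2 * Real.exp (-T ^ 2 / (2 * Fintype.card κ))) *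
        Fintype.card (ι → κ → ℤˣ) := by
  let transpose : (ι → κ → ℤˣ) ≃ (κ → ι → ℤˣ) := Equiv.piComm fun _ _ ↦ ℤˣ
  rw [Fintype.card_congr transpose]
  refine le_of_eq_of_le ?_ (card_exists_le_abs_signInner_columns_le (ι := κ) hT)
  exact congrArg Nat.cast (card_equiv transpose fun M ↦ by simp [transpose])

lemma exists_abs_signInner_lt {T U : ℝ} (hT : 0 ≤ T) (hU : 0 ≤ U)
    (h : Fintype.card ι ^ 2 * (2 * Real.exp (-T ^ 2 / (2 * Fintype.card κ))) +
      Fintype.card κ ^ 2 * (2 * Real.exp (-U ^ 2 / (2 * Fintype.card ι))) < 1) :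
    ∃ M : ι → κ → ℤˣ, (∀ i j, i ≠ j → |signInner (M i) (M j)| < T) ∧
      ∀ k l, k ≠ l → |signInner (M · k) (M · l)| < U := by
  classical
  let badRows : Finset (ι → κ → ℤˣ) := {M | ∃ i j, i ≠ j ∧ T ≤ |signInner (M i) (M j)|}
  let badColumns : Finset (ι → κ → ℤˣ) :=
    {M | ∃ k l, k ≠ l ∧ U ≤ |signInner (M · k) (M · l)|}
  have hcard : (#(badRows ∪ badColumns) : ℝ) < #(univ : Finset (ι → κ → ℤˣ)) := by
    calc (#(badRows ∪ badColumns) : ℝ)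
        ≤ #badRows + #badColumns := mod_cast card_union_le _ _
      _ ≤ _ := add_le_add (card_exists_le_abs_signInner_rows_le hT)
          (card_exists_le_abs_signInner_columns_le hU)
      _ = _ * (Fintype.card (ι → κ → ℤˣ) : ℝ) := (add_mul _ _ _).symm
      _ < #(univ : Finset (ι → κ → ℤˣ)) :=
          mul_lt_of_lt_one_left (mod_cast Fintype.card_pos) h
  obtain ⟨M, -, hM⟩ := exists_mem_notMem_of_card_lt_card (Nat.cast_lt.1 hcard)
  refine ⟨M, ?_⟩
  simpa [badRows, badColumns] using hM

end SignMatrices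

section Bipartitions

lemma mul_signInner_le_abs {ι : Type*} [Fintype ι] (a : ℤˣ) (u v : ι → ℤˣ) :
    (a : ℤ) * signInner u v ≤ |signInner u v| := by
  simpa [abs_mul, abs_unit_intCast] using le_abs_self ((a : ℤ) * signInner u v)

lemma card_filter_mul_eq_mul_le {ι : Type*} [Fintype ι] (a b : ℤˣ) (u v : ι → ℤˣ) :
    (#{i | a * u i = b * v i} : ℝ) ≤ (Fintype.card ι + |signInner u v|) / 2 := by
  have hindicator (p q : ℤˣ) :
      (if p = q then (1 : ℝ) else 0) = (1 + ((p * q : ℤˣ) : ℤ)) / 2 := by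
    rcases Int.units_eq_one_or p with rfl | rfl <;>
      rcases Int.units_eq_one_or q with rfl | rfl <;> norm_num
  calc (#{i | a * u i = b * v i} : ℝ)
      = ∑ i, (1 + (((a * u i * (b * v i) : ℤˣ) : ℤ) : ℝ)) / 2 := by
        rw [← sum_boole]
        exact sum_congr rfl fun i _ ↦ hindicator _ _
    _ = (Fintype.card ι + ((a * b : ℤˣ) : ℤ) * signInner u v) / 2 := by
        simp_rw [← sum_div, sum_add_distrib, sum_const, card_univ, nsmul_one, signInner, mul_sum,
          mul_mul_mul_comm a _ b _]
        push_cast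
        rfl
    _ ≤ (Fintype.card ι + |signInner u v|) / 2 := by
        gcongr
        exact mul_signInner_le_abs _ _ _

/-- An `(n, d, α, β)`-sequence: a family `B` of equitable bipartitions of `X` that is
`α`-orthogonal and `β`-balanced, where `n` and `d` are the cardinalities of `X` and of the index
type `ι`. Since `ι` carries no order, orthogonality is required for all `i ≠ j`. The two
parts of the `i`-th bipartition are the components of `B i`. -/
structure IsOrthogonalBalanced {ι X : Type*} [Fintype ι] [Fintype X] [DecidableEq X] (α β : ℝ)
    (B : ι → Finset X × Finset X) : Prop where
  equitable : ∀ i, Disjoint (B i).1 (B i).2 ∧ (B i).1 ∪ (B i).2 = univ ∧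
    #(B i).1 = Fintype.card X / 2 ∧ #(B i).2 = Fintype.card X / 2
  orthogonal : ∀ i j, i ≠ j → ∀ C C' : Finset X, (C = (B i).1 ∨ C = (B i).2) →
    (C' = (B j).1 ∨ C' = (B j).2) → (#(C ∩ C') : ℝ) ≤ (1 / 4 + α) * Fintype.card X
  balanced : ∀ x y : X, x ≠ y →
    (#{i | (x ∈ (B i).1 ∧ y ∈ (B i).1) ∨ (x ∈ (B i).2 ∧ y ∈ (B i).2)} : ℝ) ≤
      (1 / 2 + β) * Fintype.card ι

variable {ι κ X : Type*} [Fintype X]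

/-- The part of sign `c` in the bipartition of `X` determined by a sign vector `r`. The equivalence
`e` encodes a perfect matching of `X`, matching the preimages of `(k, 1)` and `(k, -1)`. -/
def signPart (e : X ≃ κ × ℤˣ) (r : κ → ℤˣ) (c : ℤˣ) : Finset X :=
  {x | (e x).2 * r (e x).1 = c}

lemma mem_signPart {e : X ≃ κ × ℤˣ} {r : κ → ℤˣ} {c : ℤˣ} {x : X} :
    x ∈ signPart e r c ↔ (e x).2 * r (e x).1 = c := by
  simp [signPart]

lemma disjoint_signPart (e : X ≃ κ × ℤˣ) (r : κ → ℤˣ) {a b : ℤˣ} (hab : a ≠ b) :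
    Disjoint (signPart e r a) (signPart e r b) :=
  disjoint_left.2 fun _ ha hb ↦ hab ((mem_signPart.1 ha).symm.trans (mem_signPart.1 hb))

lemma signPart_one_union_signPart_neg_one [DecidableEq X] (e : X ≃ κ × ℤˣ) (r : κ → ℤˣ) :
    signPart e r 1 ∪ signPart e r (-1) = univ :=
  eq_univ_of_forall fun x ↦ mem_union.2 <|
    (Int.units_eq_one_or ((e x).2 * r (e x).1)).imp mem_signPart.2 mem_signPart.2

lemma card_same_signPart_le [Fintype ι] [DecidableEq X] (e : X ≃ κ × ℤˣ)
    (M : ι → κ → ℤˣ) {x y : X} (hxy : x ≠ y) {U : ℝ} (hU : 0 ≤ U)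
    (hM : ∀ k l, k ≠ l → |signInner (M · k) (M · l)| ≤ U) :
    (#{i | (x ∈ signPart e (M i) 1 ∧ y ∈ signPart e (M i) 1) ∨
      (x ∈ signPart e (M i) (-1) ∧ y ∈ signPart e (M i) (-1))} : ℝ) ≤
      (Fintype.card ι + U) / 2 := by
  have hsame (a b : ℤˣ) : (a = 1 ∧ b = 1) ∨ (a = -1 ∧ b = -1) ↔ a = b := by
    revert a b
    decide
  simp only [mem_signPart, hsame]
  by_cases hmatched : (e x).1 = (e y).1
  · have hsep : (e x).2 ≠ (e y).2 := fun h ↦ hxy (e.injective (Prod.ext hmatched h))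
    simp only [hmatched, mul_left_inj, hsep, filter_false, card_empty, Nat.cast_zero]
    positivity
  · refine (card_filter_mul_eq_mul_le _ _ (M · (e x).1) (M · (e y).1)).trans ?_
    gcongr
    exact hM _ _ hmatched

variable [Fintype κ]

lemma card_signPart_inter_signPart [DecidableEq X] (e : X ≃ κ × ℤˣ) (r s : κ → ℤˣ) (a b : ℤˣ) :
    #(signPart e r a ∩ signPart e s b) = #{k | a * r k = b * s k} := by
  -- over each `k`, the only candidate in `signPart e r a` is the element with sign `a * r k`
  have hmem (k : κ) (t : ℤˣ) :
      t * r k = a ∧ t * s k = b ↔ t = a * r k ∧ a * r k = b * s k := by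
    generalize r k = p, s k = q
    revert t a b p q
    decide
  refine card_bij' (fun x _ ↦ (e x).1) (fun k _ ↦ e.symm (k, a * r k)) ?_ ?_ ?_ ?_
  · intro x hx
    simp only [mem_inter, mem_signPart, hmem] at hx
    simpa using hx.2
  · intro k hk
    simpa [mem_signPart, hmem] using hk
  · intro x hx
    simp only [mem_inter, mem_signPart, hmem] at hx
    rw [Equiv.symm_apply_eq, ← hx.1]
  · simp

lemma card_signPart (e : X ≃ κ × ℤˣ) (r : κ → ℤˣ) (c : ℤˣ) :
    #(signPart e r c) = Fintype.card κ := by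
  classical
  rw [← inter_self (signPart e r c), card_signPart_inter_signPart]
  simp

lemma card_signPart_inter_signPart_le [DecidableEq X] (e : X ≃ κ × ℤˣ) (r s : κ → ℤˣ)
    (a b : ℤˣ) :
    (#(signPart e r a ∩ signPart e s b) : ℝ) ≤ (Fintype.card κ + |signInner r s|) / 2 := by
  rw [card_signPart_inter_signPart]
  exact card_filter_mul_eq_mul_le a b r s

variable [Fintype ι] [DecidableEq X]

lemma isOrthogonalBalanced_signPart (e : X ≃ κ × ℤˣ) (M : ι → κ → ℤˣ) {α β : ℝ} (hβ : 0 ≤ β)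
    (hrows : ∀ i j, i ≠ j → |signInner (M i) (M j)| ≤ 4 * α * Fintype.card κ)
    (hcolumns : ∀ k l, k ≠ l → |signInner (M · k) (M · l)| ≤ 2 * β * Fintype.card ι) :
    IsOrthogonalBalanced α β fun i ↦ (signPart e (M i) 1, signPart e (M i) (-1)) := by
  have hX : Fintype.card X = Fintype.card κ * 2 := by simp [Fintype.card_congr e]
  have hinter (i j : ι) (hij : i ≠ j) (a b : ℤˣ) :
      (#(signPart e (M i) a ∩ signPart e (M j) b) : ℝ) ≤ (1 / 4 + α) * Fintype.card X := by
    have := card_signPart_inter_signPart_le e (M i) (M j) a b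
    rw [hX]
    push_cast
    linarith [hrows i j hij]
  exact {
    equitable i := ⟨disjoint_signPart e (M i) (by decide),
      signPart_one_union_signPart_neg_one e (M i), by simp [card_signPart, hX],
      by simp [card_signPart, hX]⟩
    orthogonal i j hij C C' hC hC' := by
      rcases hC with rfl | rfl <;> rcases hC' with rfl | rfl <;> exact hinter i j hij _ _
    balanced x y hxy :=
      (card_same_signPart_le e M hxy (by positivity) hcolumns).trans_eq (by ring) }

theorem exists_isOrthogonalBalanced {α β : ℝ} (hX : Even (Fintype.card X))
    (hα : 0 ≤ α) (hβ : 0 ≤ β)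
    (h : 2 * Fintype.card ι ^ 2 * Real.exp (-(4 * α ^ 2 * Fintype.card X)) +
      Fintype.card X ^ 2 / 2 * Real.exp (-(2 * β ^ 2 * Fintype.card ι)) < 1) :
    ∃ B : ι → Finset X × Finset X, IsOrthogonalBalanced α β B := by
  obtain ⟨m, hm⟩ := hX
  let e : X ≃ Fin m × ℤˣ := Fintype.equivOfCardEq (by simp [hm, mul_two])
  have hexponent (c N : ℝ) : -(c * N) ^ 2 / (2 * N) = -(c ^ 2 / 2 * N) := by
    rcases eq_or_ne N 0 with rfl | hN
    · simp
    · field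
  obtain ⟨M, hrows, hcolumns⟩ := exists_abs_signInner_lt (ι := ι) (κ := Fin m)
    (T := 4 * α * m) (U := 2 * β * Fintype.card ι) (by positivity) (by positivity) (by
      rw [Fintype.card_fin, hexponent, hexponent]
      refine h.trans_eq' ?_
      rw [hm]
      push_cast
      ring_nf)
  exact ⟨_, isOrthogonalBalanced_signPart e M hβ (by simpa using fun i j hij ↦ (hrows i j hij).le)
    fun k l hkl ↦ (hcolumns k l hkl).le⟩

end Bipartitions

section Parameters

lemma two_mul_sq_mul_exp_neg_eight_mul_log_lt_half {x : ℝ} (hx : 2 ≤ x) :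
    2 * x ^ 2 * Real.exp (-(8 * Real.log x)) < 1 / 2 := by
  have hx0 : 0 < x := by linarith
  have hexp : Real.exp (-(8 * Real.log x)) = (x ^ 8)⁻¹ := by
    rw [Real.exp_neg, ← Real.exp_log (pow_pos hx0 8), Real.log_pow, Nat.cast_ofNat]
  calc 2 * x ^ 2 * Real.exp (-(8 * Real.log x)) = 2 / x ^ 6 := by
        rw [hexp]
        field
    _ ≤ 2 / 2 ^ 6 := by gcongr
    _ < 1 / 2 := by norm_num

lemma sq_le_exp_div_of_le_two_pow {d n : ℕ} (hnd : n ≤ 2 ^ (d / 200)) :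
    (n : ℝ) ^ 2 ≤ Real.exp (d / 128) := by
  have hfloor : ((d / 200 : ℕ) : ℝ) ≤ d / 200 := mod_cast Nat.cast_div_le (m := d) (n := 200)
  have htwo_pow : (2 : ℝ) ^ (d / 200) = Real.exp ((d / 200 : ℕ) * Real.log 2) := by
    rw [Real.exp_nat_mul, Real.exp_log two_pos]
  calc (n : ℝ) ^ 2 ≤ (2 ^ (d / 200)) ^ 2 := by gcongr; exact_mod_cast hnd
    _ = Real.exp (2 * (d / 200 : ℕ) * Real.log 2) := by
        rw [htwo_pow, ← Real.exp_nat_mul, mul_assoc, Nat.cast_ofNat]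
    _ ≤ Real.exp (2 * (d / 200) * 0.7) := by
        gcongr
        linarith [Real.log_two_lt_d9]
    _ ≤ Real.exp (d / 128) := by
        gcongr
        linarith [(Nat.cast_nonneg d : (0 : ℝ) ≤ d)]

end Parameters

/-- **Existence of orthogonal balanced sequences of bipartitions (Lemma 5.2).**
For every `d ≥ 200` and every even `2 ≤ n ≤ 2^{⌊d/200⌋}`, there is a sequence of `d`
equitable bipartitions of an `n`-element set that is `α`-orthogonal with
`α = √(2 ln(d)/n)` and `β`-balanced with `β = 1/16`. -/
theorem balanced_sequence_exists (d n : ℕ) (hd : 200 ≤ d) (hn2 : 2 ≤ n) (hne : Even n)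
    (hnd : n ≤ 2 ^ (d / 200)) :
    ∃ B : Fin d → Finset (Fin n) × Finset (Fin n),
      (∀ i, Disjoint (B i).1 (B i).2 ∧ (B i).1 ∪ (B i).2 = univ ∧
        (B i).1.card = n / 2 ∧ (B i).2.card = n / 2) ∧
      (∀ i j : Fin d, i < j → ∀ C C' : Finset (Fin n),
        (C = (B i).1 ∨ C = (B i).2) → (C' = (B j).1 ∨ C' = (B j).2) →
        ((C ∩ C').card : ℝ) ≤ (1 / 4 + Real.sqrt (2 * Real.log d / n)) * n) ∧
      (∀ x y : Fin n, x ≠ y →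
        (((univ : Finset (Fin d)).filter fun i =>
            (x ∈ (B i).1 ∧ y ∈ (B i).1) ∨ (x ∈ (B i).2 ∧ y ∈ (B i).2)).card : ℝ) ≤
          (1 / 2 + 1 / 16) * d) := by
  have hd' : (200 : ℝ) ≤ d := mod_cast hd
  have hrows : 4 * √(2 * Real.log d / n) ^ 2 * n = 8 * Real.log d := by
    rw [Real.sq_sqrt (by positivity)]
    field
  have hcolumns : (n : ℝ) ^ 2 / 2 * Real.exp (-(2 * (1 / 16) ^ 2 * d)) ≤ 1 / 2 := by
    rw [show 2 * (1 / 16) ^ 2 * (d : ℝ) = d / 128 by ring, Real.exp_neg, ← div_eq_mul_inv,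
      div_le_iff₀ (Real.exp_pos _)]
    linarith [sq_le_exp_div_of_le_two_pow hnd]
  obtain ⟨B, hB⟩ := exists_isOrthogonalBalanced (ι := Fin d) (X := Fin n)
    (α := √(2 * Real.log d / n)) (β := 1 / 16) (by simpa using hne) (by positivity) (by norm_num)
    (by
      rw [Fintype.card_fin, Fintype.card_fin, hrows]
      linarith [two_mul_sq_mul_exp_neg_eight_mul_log_lt_half (x := d) (by linarith)])
  exact ⟨B, by simpa using hB.equitable,
    fun i j hij ↦ by simpa using hB.orthogonal i j hij.ne, by simpa using hB.balanced⟩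
end

section
/- Let Z be an ε-regular partition of a graph G (in the not-necessarily-equitable sense), and let X be any partition of V(G) of order k. Then the common refinement Z ∩ X = { Z ∩ X : Z ∈ Z, X ∈ X } is a √(8kε)-regular partition of G. -/
/-!
A family of pairs of parts is weighed by the number of vertex pairs `(u, v)` whose parts form a
pair of the family. Let `P` refine `Z` so that each part of `Z` splits into at most `k` parts of
`P`, let `3kε ≤ δ² < 1` and `c = ε / δ`, and call a vertex small if its part `W` of `P` and its
part `A` of `Z` satisfy `|W| < c |A|`. The at most `k` pieces of each part of `Z` give at most
`kcn ≤ (δ / 3) n` small vertices. If neither `u` nor `v` is small, then a `δ`-fraction of the part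
of `u` or `v` in `P` is at least a `δc = ε`-fraction of its part in `Z`, so regularity passes from
the pair of parts in `Z` to that in `P`, with error `2ε ≤ δ`. At most `εn² ≤ (δ / 3) n²` vertex
pairs are lost to irregular pairs of `Z` and `2 (δ / 3) n²` to small vertices, which makes `δn²`
in all.
-/

open Finset
open scoped Classical

/-- A (not necessarily equitable) vertex partition `P` is `ε`-regular if the sum of
`|Z||Z'|` over ordered pairs of parts `(Z,Z')` that are not `ε`-regular is at most `ε n²`. -/
def IsRegularPartitionW {V : Type*} [Fintype V] [DecidableEq V] (G : SimpleGraph V)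
    (ε : ℝ) (P : Finpartition (univ : Finset V)) : Prop :=
  ∑ pq ∈ (P.parts ×ˢ P.parts).filter (fun pq => ¬ RegPair G ε pq.1 pq.2),
      ((pq.1.card : ℝ) * pq.2.card) ≤ ε * (Fintype.card V : ℝ) ^ 2

section Parts

variable {α : Type*} [DecidableEq α] {s t : Finset α}

lemma sum_parts_sum_mem {M : Type*} [AddCommMonoid M] (P : Finpartition s)
    (f : Finset α → α → M) :
    ∑ A ∈ P.parts, ∑ a ∈ A, f A a = ∑ a ∈ s, f (P.part a) a := by
  calc ∑ A ∈ P.parts, ∑ a ∈ A, f A a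
    _ = ∑ A ∈ P.parts, ∑ a ∈ A, f (P.part a) a :=
      sum_congr rfl fun A hA ↦ sum_congr rfl fun a ha ↦ by rw [P.part_eq_of_mem hA ha]
    _ = ∑ a ∈ P.parts.biUnion id, f (P.part a) a := (sum_biUnion P.disjoint).symm
    _ = ∑ a ∈ s, f (P.part a) a := sum_congr P.biUnion_parts fun _ _ ↦ rfl

lemma sum_card_mul_card_filter_parts (P : Finpartition s) (Q : Finpartition t)
    (r : Finset α → Finset α → Prop) [DecidableRel r] :
    ∑ p ∈ P.parts ×ˢ Q.parts with r p.1 p.2, #p.1 * #p.2 =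
      #{u ∈ s ×ˢ t | r (P.part u.1) (Q.part u.2)} := by
  calc ∑ p ∈ P.parts ×ˢ Q.parts with r p.1 p.2, #p.1 * #p.2
    _ = ∑ A ∈ P.parts, ∑ B ∈ Q.parts, ∑ _a ∈ A, ∑ _b ∈ B, if r A B then 1 else 0 := by
      rw [sum_filter, sum_product]
      simp only [sum_const, smul_eq_mul, mul_ite, mul_one, mul_zero]
    _ = ∑ A ∈ P.parts, ∑ _a ∈ A, ∑ B ∈ Q.parts, ∑ _b ∈ B, if r A B then 1 else 0 :=
      sum_congr rfl fun A _ ↦ sum_comm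
    _ = ∑ a ∈ s, ∑ b ∈ t, if r (P.part a) (Q.part b) then 1 else 0 := by
      rw [sum_parts_sum_mem P fun A _ ↦ ∑ B ∈ Q.parts, ∑ _b ∈ B, if r A B then 1 else 0]
      exact sum_congr rfl fun a _ ↦ sum_parts_sum_mem Q fun B _ ↦ if r (P.part a) B then 1 else 0
    _ = #{u ∈ s ×ˢ t | r (P.part u.1) (Q.part u.2)} := by rw [card_filter, sum_product]

lemma part_subset_part {P Z : Finpartition s} (h : P ≤ Z) (a : α) : P.part a ⊆ Z.part a := by
  by_cases ha : a ∈ s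
  · obtain ⟨A, hA, hPA⟩ := h (P.part_mem.2 ha)
    rwa [Z.part_eq_of_mem hA (hPA (P.mem_part ha))]
  · rw [P.part_eq_empty.2 ha]
    exact empty_subset _

lemma card_filter_subset_parts_inf_le (Z X : Finpartition s) {A : Finset α} (hA : A ∈ Z.parts) :
    #{W ∈ (Z ⊓ X).parts | W ⊆ A} ≤ #X.parts := by
  refine (card_le_card fun W hW ↦ ?_).trans (card_image_le (f := (A ∩ ·)))
  obtain ⟨hWP, hWA⟩ := mem_filter.1 hW
  obtain ⟨a, ha⟩ := (Z ⊓ X).nonempty_of_mem_parts hWP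
  rw [Finpartition.parts_inf, mem_erase, mem_image] at hWP
  obtain ⟨-, ⟨A', B⟩, hAB, rfl⟩ := hWP
  obtain ⟨hA', hB⟩ := mem_product.1 hAB
  obtain rfl : A' = A := Z.eq_of_mem_parts hA' hA (mem_inter.1 ha).1 (hWA ha)
  exact mem_image_of_mem _ hB

/-- The points whose part in `P` has less than a proportion `c` of the size of their part in `Z`.
Meant for `P` a refinement of `Z`. -/
noncomputable def smallPartPoints (Z P : Finpartition s) (c : ℝ) : Finset α :=
  {a ∈ s | (#(P.part a) : ℝ) < c * #(Z.part a)}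

lemma card_filter_card_part_lt_le (P : Finpartition s) {A : Finset α} {x : ℝ} (hx : 0 ≤ x)
    (hAs : A ⊆ s) (hPA : ∀ a ∈ A, P.part a ⊆ A) :
    (#{a ∈ A | (#(P.part a) : ℝ) < x} : ℝ) ≤ #{B ∈ P.parts | B ⊆ A} * x := by
  set small : Finset (Finset α) := {B ∈ P.parts | B ⊆ A ∧ (#B : ℝ) < x}
  have h_cover : {a ∈ A | (#(P.part a) : ℝ) < x} ⊆ small.biUnion id := fun a ha ↦ by
    obtain ⟨haA, hax⟩ := mem_filter.1 ha
    exact mem_biUnion.2 ⟨P.part a, mem_filter.2 ⟨P.part_mem.2 (hAs haA), hPA a haA, hax⟩,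
      P.mem_part (hAs haA)⟩
  have h_small : #small ≤ #{B ∈ P.parts | B ⊆ A} :=
    card_le_card (monotone_filter_right _ fun _ _ h ↦ h.1)
  calc (#{a ∈ A | (#(P.part a) : ℝ) < x} : ℝ)
    _ ≤ ∑ B ∈ small, (#B : ℝ) := mod_cast (card_le_card h_cover).trans card_biUnion_le
    _ ≤ #small * x := by
      rw [← nsmul_eq_mul]
      exact sum_le_card_nsmul _ _ _ fun B hB ↦ (mem_filter.1 hB).2.2.le
    _ ≤ #{B ∈ P.parts | B ⊆ A} * x := by gcongr

lemma card_smallPartPoints_le {Z P : Finpartition s} (hPZ : P ≤ Z) {k : ℕ}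
    (hk : ∀ A ∈ Z.parts, #{B ∈ P.parts | B ⊆ A} ≤ k) {c : ℝ} (hc : 0 ≤ c) :
    (#(smallPartPoints Z P c) : ℝ) ≤ k * c * #s := by
  have h_part : ∀ A ∈ Z.parts, (#{a ∈ A | (#(P.part a) : ℝ) < c * #A} : ℝ) ≤ k * (c * #A) := by
    intro A hA
    have h_sub : ∀ a ∈ A, P.part a ⊆ A := fun a ha ↦
      (part_subset_part hPZ a).trans_eq (Z.part_eq_of_mem hA ha)
    refine (card_filter_card_part_lt_le P (by positivity) (Z.subset hA) h_sub).trans ?_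
    gcongr
    exact hk A hA
  calc (#(smallPartPoints Z P c) : ℝ)
    _ = ∑ A ∈ Z.parts, (#{a ∈ A | (#(P.part a) : ℝ) < c * #A} : ℝ) := by
      simp only [smallPartPoints, card_filter, Nat.cast_sum]
      exact (sum_parts_sum_mem Z fun A a ↦
        ((if (#(P.part a) : ℝ) < c * #A then 1 else 0 : ℕ) : ℝ)).symm
    _ ≤ ∑ A ∈ Z.parts, k * (c * #A) := sum_le_sum h_part
    _ = k * c * #s := by
      rw [← Z.sum_card_parts, Nat.cast_sum, mul_sum]
      exact sum_congr rfl fun A _ ↦ (mul_assoc _ _ _).symm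

end Parts

section Regularity

variable {V : Type*} [Fintype V] {G : SimpleGraph V} {ε δ : ℝ}

lemma RegPair.mono_of_subset {A B C D : Finset V} (h : RegPair G ε A B) (hCA : C ⊆ A)
    (hDB : D ⊆ B) (hδ : δ ≤ 1) (hεδ : 2 * ε ≤ δ) (hC : ε * #A ≤ δ * #C) (hD : ε * #B ≤ δ * #D) :
    RegPair G δ C D := by
  intro C' hC' D' hD' hcC hcD
  have h_whole : |dens G A B - dens G C D| ≤ ε :=
    h C hCA D hDB (hC.trans (mul_le_of_le_one_left (Nat.cast_nonneg _) hδ))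
      (hD.trans (mul_le_of_le_one_left (Nat.cast_nonneg _) hδ))
  have h_sub : |dens G A B - dens G C' D'| ≤ ε :=
    h C' (hC'.trans hCA) D' (hD'.trans hDB) (hC.trans hcC) (hD.trans hcD)
  calc |dens G C D - dens G C' D'|
    _ ≤ |dens G C D - dens G A B| + |dens G A B - dens G C' D'| := abs_sub_le _ _ _
    _ ≤ ε + ε := add_le_add (by rwa [abs_sub_comm]) h_sub
    _ ≤ δ := by rwa [← two_mul]

variable [DecidableEq V] {Z P : Finpartition (univ : Finset V)}

/-- The ordered pairs of vertices whose parts in `P` do not form an `ε`-regular pair. Their number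
is the weight that `IsRegularPartitionW` bounds. -/
noncomputable def irregularVertexPairs (G : SimpleGraph V) (ε : ℝ)
    (P : Finpartition (univ : Finset V)) : Finset (V × V) :=
  {u | ¬ RegPair G ε (P.part u.1) (P.part u.2)}

lemma isRegularPartitionW_iff_card_irregularVertexPairs_le :
    IsRegularPartitionW G ε P ↔
      (#(irregularVertexPairs G ε P) : ℝ) ≤ ε * (Fintype.card V : ℝ) ^ 2 := by
  have h := sum_card_mul_card_filter_parts P P fun A B ↦ ¬ RegPair G ε A B
  rw [univ_product_univ] at h
  rw [IsRegularPartitionW, irregularVertexPairs, ← h]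
  push_cast
  rfl

lemma IsRegularPartitionW.nonneg [Nonempty V] (h : IsRegularPartitionW G ε P) : 0 ≤ ε :=
  nonneg_of_mul_nonneg_left
    ((Nat.cast_nonneg _).trans (isRegularPartitionW_iff_card_irregularVertexPairs_le.1 h))
    (by positivity)

lemma isRegularPartitionW_of_isEmpty [IsEmpty V] : IsRegularPartitionW G ε P := by
  rw [isRegularPartitionW_iff_card_irregularVertexPairs_le, eq_empty_of_isEmpty
    (irregularVertexPairs G ε P), Fintype.card_eq_zero (α := V)]
  simp

lemma isRegularPartitionW_of_one_le (h : 1 ≤ ε) : IsRegularPartitionW G ε P := by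
  rw [isRegularPartitionW_iff_card_irregularVertexPairs_le]
  calc (#(irregularVertexPairs G ε P) : ℝ)
    _ ≤ (Fintype.card V : ℝ) ^ 2 := by
      rw [sq]
      exact_mod_cast (card_le_univ _).trans_eq (Fintype.card_prod V V)
    _ ≤ ε * (Fintype.card V : ℝ) ^ 2 := le_mul_of_one_le_left (by positivity) h

lemma irregularVertexPairs_subset (hPZ : P ≤ Z) {c : ℝ} (hδ₀ : 0 ≤ δ) (hδ₁ : δ ≤ 1)
    (hεδ : 2 * ε ≤ δ) (hεc : ε ≤ δ * c) :
    irregularVertexPairs G δ P ⊆ irregularVertexPairs G ε Z ∪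
      (smallPartPoints Z P c ×ˢ univ ∪ univ ×ˢ smallPartPoints Z P c) := by
  have h_large {u : V} (hu : u ∉ smallPartPoints Z P c) :
      ε * #(Z.part u) ≤ δ * #(P.part u) := by
    simp only [smallPartPoints, mem_filter, mem_univ, true_and, not_lt] at hu
    calc ε * #(Z.part u) ≤ δ * c * #(Z.part u) := by gcongr
      _ = δ * (c * #(Z.part u)) := mul_assoc _ _ _
      _ ≤ δ * #(P.part u) := by gcongr
  rintro ⟨u, v⟩ huv
  contrapose! huv
  simp only [irregularVertexPairs, mem_union, mem_product, mem_filter, mem_univ, true_and, and_true,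
    not_or, not_not] at huv ⊢
  obtain ⟨hreg, hu, hv⟩ := huv
  exact hreg.mono_of_subset (part_subset_part hPZ u) (part_subset_part hPZ v) hδ₁ hεδ
    (h_large hu) (h_large hv)

lemma IsRegularPartitionW.of_refinement (hZ : IsRegularPartitionW G ε Z) (hPZ : P ≤ Z) {k : ℕ}
    (hk : ∀ A ∈ Z.parts, #{B ∈ P.parts | B ⊆ A} ≤ k) {c : ℝ} (hc : 0 ≤ c) (hδ₀ : 0 ≤ δ)
    (hδ₁ : δ ≤ 1) (hεδ : 2 * ε ≤ δ) (hεc : ε ≤ δ * c) (hδ : ε + 2 * (k * c) ≤ δ) :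
    IsRegularPartitionW G δ P := by
  rw [isRegularPartitionW_iff_card_irregularVertexPairs_le] at hZ ⊢
  set S := smallPartPoints Z P c
  set n := Fintype.card V
  have hS : (#S : ℝ) ≤ k * c * n := card_smallPartPoints_le hPZ hk hc
  have h_union : #(irregularVertexPairs G δ P) ≤
      #(irregularVertexPairs G ε Z) + (#S * n + n * #S) := by
    refine (card_le_card (irregularVertexPairs_subset hPZ hδ₀ hδ₁ hεδ hεc)).trans ?_
    refine (card_union_le _ _).trans (Nat.add_le_add_left ((card_union_le _ _).trans_eq ?_) _)
    rw [card_product, card_product, card_univ]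
  calc (#(irregularVertexPairs G δ P) : ℝ)
    _ ≤ #(irregularVertexPairs G ε Z) + (#S * n + n * #S) := mod_cast h_union
    _ ≤ ε * n ^ 2 + (k * c * n * n + n * (k * c * n)) := by gcongr
    _ = (ε + 2 * (k * c)) * n ^ 2 := by ring
    _ ≤ δ * n ^ 2 := by gcongr

theorem common_refinement_regular_general (hZ : IsRegularPartitionW G ε Z) (hPZ : P ≤ Z) {k : ℕ}
    (hk : ∀ A ∈ Z.parts, #{B ∈ P.parts | B ⊆ A} ≤ k) (hδ₀ : 0 ≤ δ) (hδ : 3 * k * ε ≤ δ ^ 2) :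
    IsRegularPartitionW G δ P := by
  cases isEmpty_or_nonempty V with
  | inl _ => exact isRegularPartitionW_of_isEmpty
  | inr _ =>
    obtain hδ₁ | hδ₁ := le_total 1 δ
    · exact isRegularPartitionW_of_one_le hδ₁
    have hε : 0 ≤ ε := hZ.nonneg
    have hk₁ : (1 : ℝ) ≤ k := by
      obtain ⟨A, hA⟩ := Z.parts_nonempty univ_nonempty.ne_empty
      obtain ⟨B, hB, hBA⟩ := Finpartition.exists_le_of_le hPZ hA
      exact_mod_cast (card_pos.2 ⟨B, mem_filter.2 ⟨hB, hBA⟩⟩).trans_le (hk A hA)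
    have hε_sq : 3 * ε ≤ δ ^ 2 := by nlinarith
    have hεδ : 3 * ε ≤ δ := hε_sq.trans (pow_le_of_le_one hδ₀ hδ₁ two_ne_zero)
    -- The case `δ = 0` is included: then `ε = 0`, and `ε / δ = 0`.
    have hεc : δ * (ε / δ) = ε := mul_div_cancel_of_imp' fun h ↦ by linarith
    have hkc : k * (ε / δ) ≤ δ / 3 := by
      rw [← mul_div_assoc]
      exact div_le_of_le_mul₀ hδ₀ (by positivity) (by linarith)
    exact hZ.of_refinement hPZ hk (div_nonneg hε hδ₀) hδ₀ hδ₁ (by linarith) hεc.ge (by linarith)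

end Regularity

/-- **Regularity of the common refinement (Claim 5.5).**
If `Z` is an `ε`-regular partition of `G` and `X` is any partition of `V(G)` of order `k`,
then the common refinement `Z ⊓ X` is a `√(8kε)`-regular partition of `G`. -/
theorem common_refinement_regular {V : Type*} [Fintype V] [DecidableEq V] (G : SimpleGraph V)
    (ε : ℝ) (Z X : Finpartition (univ : Finset V)) (k : ℕ) (hk : X.parts.card = k)
    (hZ : IsRegularPartitionW G ε Z) :
    IsRegularPartitionW G (Real.sqrt (8 * k * ε)) (Z ⊓ X) := by
  refine common_refinement_regular_general hZ inf_le_left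
    (fun A hA ↦ hk ▸ card_filter_subset_parts_inf_le Z X hA) (Real.sqrt_nonneg _) ?_
  rw [Real.sq_sqrt', le_max_iff]
  exact (le_total 0 (k * ε)).imp (fun h ↦ by linarith) fun h ↦ by linarith
end
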